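/- arXiv:2408.06313 — 7 statements merged into one kernel-verified Lean document; each statement's English description precedes it below -/
import Mathlib

section
/- For every ε ∈ (0,1], the function u_ε : [0,1] × [0,1] → ℝ defined by u_ε(t,ξ) = 𝟙_{[1−t−ε/2, 1−t+ε/2]}(ξ) satisfies: (i) for every t ∈ [0,1], (∫₀¹ u_ε(t,ξ)² dξ)^{1/2} ≤ √ε; and (ii) ∫₀¹ u_ε(1−r, r) dr = 1. -/
open MeasureTheory

theorem setIntegral_indicator_one_pow_le {α : Type*} [MeasurableSpace α] {μ : Measure α}
    {s : Set α} (hs : MeasurableSet s) (hμs : μ s ≠ ⊤) (t : Set α) {n : ℕ} (hn : n ≠ 0) :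
    ∫ x in t, (s.indicator (fun _ => (1 : ℝ)) x) ^ n ∂μ ≤ μ.real s := by
  have indicator_pow (x : α) :
      (s.indicator (fun _ => (1 : ℝ)) x) ^ n = s.indicator (fun _ => (1 : ℝ)) x := by
    by_cases hx : x ∈ s <;> simp [hx, hn]
  calc ∫ x in t, (s.indicator (fun _ => (1 : ℝ)) x) ^ n ∂μ
      = μ.real (t ∩ s) := by
        simp only [indicator_pow, setIntegral_indicator hs, setIntegral_const, smul_eq_mul, mul_one]
    _ ≤ μ.real s := measureReal_mono Set.inter_subset_right hμs

theorem integral_indicator_Icc_sub_add_pow_le {a b : ℝ} (hab : a ≤ b) (c : ℝ) {δ : ℝ}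
    (hδ : 0 ≤ δ) {n : ℕ} (hn : n ≠ 0) :
    ∫ x in a..b, ((Set.Icc (c - δ) (c + δ)).indicator (fun _ => (1 : ℝ)) x) ^ n ≤ 2 * δ := by
  rw [intervalIntegral.integral_of_le hab, ← Real.closedBall_eq_Icc,
    ← Real.volume_real_closedBall hδ]
  exact setIntegral_indicator_one_pow_le measurableSet_closedBall measure_closedBall_lt_top.ne _ hn

theorem integral_indicator_Icc_sub_add_self (a b : ℝ) {δ : ℝ} (hδ : 0 ≤ δ) :
    ∫ x in a..b, (Set.Icc (x - δ) (x + δ)).indicator (fun _ => (1 : ℝ)) x = b - a := by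
  have self_mem (x : ℝ) : x ∈ Set.Icc (x - δ) (x + δ) :=
    ⟨sub_le_self x hδ, le_add_of_nonneg_right hδ⟩
  simp only [Set.indicator_of_mem (self_mem _), integral_one]

theorem stmt_1_general {ε : ℝ} (hε : 0 ≤ ε) :
    (∀ t : ℝ,
      Real.sqrt (∫ ξ in (0:ℝ)..1,
          (Set.indicator (Set.Icc (1 - t - ε/2) (1 - t + ε/2)) (fun _ => (1:ℝ)) ξ) ^ 2)
        ≤ Real.sqrt ε) ∧
    (∫ r in (0:ℝ)..1,
        Set.indicator (Set.Icc (1 - (1 - r) - ε/2) (1 - (1 - r) + ε/2)) (fun _ => (1:ℝ)) r)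
      = 1 := by
  have half_nonneg : 0 ≤ ε / 2 := div_nonneg hε zero_le_two
  refine ⟨fun t => Real.sqrt_le_sqrt ?_, ?_⟩
  · calc _ ≤ 2 * (ε / 2) :=
          integral_indicator_Icc_sub_add_pow_le zero_le_one (1 - t) half_nonneg two_ne_zero
      _ = ε := mul_div_cancel₀ ε two_ne_zero
  · -- Along the characteristic `t = 1 - r` the window is centred at the evaluation point `r`.
    simp only [sub_sub_cancel]
    rw [integral_indicator_Icc_sub_add_self 0 1 half_nonneg, sub_zero]

/-- For `ε ∈ (0,1]`, the input `u_ε(t,ξ) = 𝟙_{[1-t-ε/2, 1-t+ε/2]}(ξ)` of the dual transport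
system has `L²([0,1])`-norm at most `√ε` at every time `t ∈ [0,1]`, while the output of the
dual system at time `1`, namely `∫₀¹ u_ε(1-r, r) dr`, equals `1`. -/
theorem stmt_1 (ε : ℝ) (hε : ε ∈ Set.Ioc (0:ℝ) 1) :
    (∀ t ∈ Set.Icc (0:ℝ) 1,
      Real.sqrt (∫ ξ in (0:ℝ)..1,
          (Set.indicator (Set.Icc (1 - t - ε/2) (1 - t + ε/2)) (fun _ => (1:ℝ)) ξ) ^ 2)
        ≤ Real.sqrt ε) ∧
    (∫ r in (0:ℝ)..1,
        Set.indicator (Set.Icc (1 - (1 - r) - ε/2) (1 - (1 - r) + ε/2)) (fun _ => (1:ℝ)) r)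
      = 1 := by
  obtain ⟨norm_le, output_eq⟩ := stmt_1_general hε.1.le
  exact ⟨fun t _ => norm_le t, output_eq⟩
end

section
/- Let (T(t))_{t≥0} be the nilpotent left-shift semigroup on L²([0,1],ℝ), given by (T(t)f)(ξ) = f(ξ+t) if ξ+t ≤ 1 and 0 otherwise. Let t ≥ 0 and let u : [0,∞) × [0,1] → ℝ be jointly measurable with ∫₀ᵗ (∫₀¹ u(s,ξ)² dξ)^{1/2} ds < ∞. Then the Bochner integral ∫₀ᵗ T(t−s) u(s,·) ds in L²([0,1],ℝ) equals (as an element of L²([0,1],ℝ)) the function ξ ↦ ∫_{max(ξ+t−1, 0)}^{t} u(s, ξ+t−s) ds. -/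
open MeasureTheory

/-!
On `Lp` of `[a, b]` the nilpotent left shift is a compression of the translation group of the line:
extend by zero, translate, restrict. Translations act isometrically and continuously on `Lp` for
`p < ∞`, so `s ↦ T (t - s) (u s)` is Bochner integrable. An `Lp`-valued Bochner integral can be
evaluated pointwise almost everywhere: localizing to sets of finite measure reduces this to `L¹`,
where integrals over measurable sets are continuous and Fubini's theorem applies. Finally,
`ξ + (t - s) ≤ b` means `ξ + t - b ≤ s`, which gives the lower limit of integration.
-/

open scoped ENNReal

section BochnerIntegral

variable {α X E : Type*} [MeasurableSpace α] [MeasurableSpace X]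
  [NormedAddCommGroup E] {ν : Measure α} {μ : Measure X} {v : α → X → E}

theorem integrable_uncurry_of_integrable_L1 [SFinite μ] {F : α → Lp E 1 μ}
    (hF : Integrable F ν) (hv : AEStronglyMeasurable (Function.uncurry v) (ν.prod μ))
    (hFv : ∀ᵐ s ∂ν, F s =ᵐ[μ] v s) : Integrable (Function.uncurry v) (ν.prod μ) := by
  refine (integrable_prod_iff hv).2 ⟨?_, hF.norm.congr ?_⟩
  · filter_upwards [hFv] with s hs using (L1.integrable_coeFn (F s)).congr hs
  · filter_upwards [hFv] with s hs
    rw [L1.norm_eq_integral_norm]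
    exact integral_congr_ae (hs.fun_comp norm)

variable [NormedSpace ℝ E]

theorem coeFn_integral_L1_ae_eq [CompleteSpace E] [SFinite ν] [SFinite μ] {F : α → Lp E 1 μ}
    (hF : Integrable F ν) (hv : AEStronglyMeasurable (Function.uncurry v) (ν.prod μ))
    (hFv : ∀ᵐ s ∂ν, F s =ᵐ[μ] v s) :
    (∫ s, F s ∂ν : Lp E 1 μ) =ᵐ[μ] fun ξ => ∫ s, v s ξ ∂ν := by
  have hv_int := integrable_uncurry_of_integrable_L1 hF hv hFv
  refine Integrable.ae_eq_of_forall_setIntegral_eq _ _ (L1.integrable_coeFn _)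
    hv_int.integral_prod_right fun A _ _ => ?_
  let ℓ : Lp E 1 μ →L[ℝ] E := L1.integralCLM ∘L LpToLpRestrictCLM X E ℝ μ 1 A
  have hℓ (f : Lp E 1 μ) : ℓ f = ∫ ξ in A, f ξ ∂μ :=
    (L1.integral_eq _).symm.trans <| (L1.integral_eq_integral _).trans <|
      integral_congr_ae (LpToLpRestrictCLM_coeFn ℝ A f)
  have hv_int_A : Integrable (Function.uncurry v) (ν.prod (μ.restrict A)) :=
    hv_int.mono_measure (Measure.prod_mono le_rfl Measure.restrict_le_self)
  calc ∫ ξ in A, (∫ s, F s ∂ν : Lp E 1 μ) ξ ∂μ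
      = ∫ s, ℓ (F s) ∂ν := by rw [← hℓ, ℓ.integral_comp_comm hF]
    _ = ∫ s, ∫ ξ in A, v s ξ ∂μ ∂ν := by
        refine integral_congr_ae ?_
        filter_upwards [hFv] with s hs
        rw [hℓ, integral_congr_ae (ae_restrict_of_ae hs)]
    _ = ∫ ξ in A, ∫ s, v s ξ ∂ν ∂μ := integral_integral_swap hv_int_A

variable {p : ℝ≥0∞} [Fact (1 ≤ p)] {A : Set X}

/-- Multiplication by the indicator of a set of finite measure, as a bounded operator that localizes
`Lp` to `L¹`. It is the Hölder product with the indicator, seen as an element of `Lp` for the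
conjugate exponent `(1 - p⁻¹)⁻¹`. -/
noncomputable def lpIndicatorToL1 (hA : MeasurableSet A) (hμA : μ A ≠ ∞) :
    Lp E p μ →L[ℝ] Lp E 1 μ :=
  haveI := ENNReal.HolderConjugate.inv_one_sub_inv' (Fact.out : 1 ≤ p)
  haveI : Fact (1 ≤ (1 - p⁻¹)⁻¹) := by simp [fact_iff]
  (ContinuousLinearMap.lsmul ℝ ℝ).holderL μ (1 - p⁻¹)⁻¹ p 1
    (indicatorConstLp (1 - p⁻¹)⁻¹ hA hμA (1 : ℝ))

theorem coeFn_lpIndicatorToL1 (hA : MeasurableSet A) (hμA : μ A ≠ ∞) (f : Lp E p μ) :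
    lpIndicatorToL1 hA hμA f =ᵐ[μ] A.indicator f := by
  have := ENNReal.HolderConjugate.inv_one_sub_inv' (Fact.out : 1 ≤ p)
  filter_upwards [(ContinuousLinearMap.lsmul ℝ ℝ).coeFn_holder (r := 1)
      (indicatorConstLp (1 - p⁻¹)⁻¹ hA hμA (1 : ℝ)) f,
    indicatorConstLp_coeFn (p := (1 - p⁻¹)⁻¹) (hs := hA) (hμs := hμA) (c := (1 : ℝ))]
    with x hmul hind
  refine hmul.trans ?_
  by_cases hx : x ∈ A <;> simp [hind, hx]

theorem coeFn_integral_Lp_ae_eq [CompleteSpace E] [SFinite ν] [SigmaFinite μ]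
    {F : α → Lp E p μ} (hF : Integrable F ν)
    (hv : AEStronglyMeasurable (Function.uncurry v) (ν.prod μ))
    (hFv : ∀ᵐ s ∂ν, F s =ᵐ[μ] v s) :
    (∫ s, F s ∂ν : Lp E p μ) =ᵐ[μ] fun ξ => ∫ s, v s ξ ∂ν := by
  refine ae_of_forall_measure_lt_top_ae_restrict _ fun A hA hμA => ?_
  let L : Lp E p μ →L[ℝ] Lp E 1 μ := lpIndicatorToL1 hA hμA.ne
  have hv_ind : AEStronglyMeasurable (Function.uncurry fun s => A.indicator (v s)) (ν.prod μ) :=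
    hv.indicator (measurable_snd hA)
  have hLF : ∀ᵐ s ∂ν, L (F s) =ᵐ[μ] A.indicator (v s) := by
    filter_upwards [hFv] with s hs
    exact (coeFn_lpIndicatorToL1 hA hμA.ne (F s)).trans hs.indicator
  have hL_int := coeFn_integral_L1_ae_eq (L.integrable_comp hF) hv_ind hLF
  rw [L.integral_comp_comm hF] at hL_int
  refine (ae_restrict_iff' hA).2 ?_
  filter_upwards [hL_int, coeFn_lpIndicatorToL1 hA hμA.ne (∫ s, F s ∂ν)] with ξ hξ hind hξA
  simpa only [Set.indicator_of_mem hξA] using hind.symm.trans hξ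

end BochnerIntegral

section ExtendByZero

variable {X E : Type*} [MeasurableSpace X] [NormedAddCommGroup E] [NormedSpace ℝ E]
  {μ : Measure X} {p : ℝ≥0∞} [Fact (1 ≤ p)] {S : Set X}

/-- Extension by zero from `Lp` of a measurable subset `S` to `Lp` of the whole space, where
translations act; the extension of `f` is represented by `S.indicator f`. -/
noncomputable def lpExtendByZero (hS : MeasurableSet S) :
    Lp E p (μ.restrict S) →ₗᵢ[ℝ] Lp E p μ where
  toFun f := ((memLp_indicator_iff_restrict hS).2 (Lp.memLp f)).toLp (S.indicator f)
  map_add' f g := by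
    rw [← MemLp.toLp_add, MemLp.toLp_eq_toLp_iff, ← Set.indicator_add',
      ← ae_eq_restrict_iff_indicator_ae_eq hS]
    exact Lp.coeFn_add f g
  map_smul' c f := by
    rw [RingHom.id_apply, ← MemLp.toLp_const_smul, MemLp.toLp_eq_toLp_iff]
    exact ((ae_eq_restrict_iff_indicator_ae_eq hS).1 (Lp.coeFn_smul c f)).trans
      (.of_eq (Set.indicator_const_smul S c f))
  norm_map' f := by
    rw [LinearMap.coe_mk, AddHom.coe_mk, Lp.norm_toLp,
      eLpNorm_indicator_eq_eLpNorm_restrict hS, Lp.norm_def]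

theorem coeFn_lpExtendByZero (hS : MeasurableSet S) (f : Lp E p (μ.restrict S)) :
    lpExtendByZero hS f =ᵐ[μ] S.indicator f := by
  have hf : MemLp (S.indicator f) p μ := (memLp_indicator_iff_restrict hS).2 (Lp.memLp f)
  exact hf.coeFn_toLp

end ExtendByZero

section CompressedTranslation

variable {M X E : Type*} [MeasurableSpace X] [NormedAddCommGroup E] [NormedSpace ℝ E]
  [VAdd M X] {μ : Measure X} [VAddInvariantMeasure M X μ] [MeasurableConstVAdd M X]
  {p : ℝ≥0∞} [Fact (1 ≤ p)] {S : Set X}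

/-- The compression to `Lp` of a measurable subset `S` of the translation `f ↦ f (c +ᵥ ·)`: extend
by zero, translate, restrict. For `S = [a, b]` and `c ≥ 0` this is the nilpotent left shift. -/
noncomputable def lpCompressedTranslation (hS : MeasurableSet S) (c : M)
    (f : Lp E p (μ.restrict S)) : Lp E p (μ.restrict S) :=
  LpToLpRestrictCLM X E ℝ μ p S (DomAddAct.mk c +ᵥ lpExtendByZero hS f)

theorem coeFn_lpCompressedTranslation_of_ae_eq (hS : MeasurableSet S) (c : M)
    {f : Lp E p (μ.restrict S)} {g : X → E} (hfg : f =ᵐ[μ.restrict S] g) :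
    lpCompressedTranslation hS c f =ᵐ[μ.restrict S] fun ξ => S.indicator g (c +ᵥ ξ) := by
  have h_extend : lpExtendByZero hS f =ᵐ[μ] S.indicator g :=
    (coeFn_lpExtendByZero hS f).trans ((ae_eq_restrict_iff_indicator_ae_eq hS).1 hfg)
  have h_translate : DomAddAct.mk c +ᵥ lpExtendByZero hS f =ᵐ[μ] fun ξ => S.indicator g (c +ᵥ ξ) :=
    (DomAddAct.vadd_Lp_ae_eq _ _).trans
      ((measurePreserving_vadd c μ).quasiMeasurePreserving.ae_eq h_extend)
  exact (LpToLpRestrictCLM_coeFn ℝ S _).trans (ae_restrict_of_ae h_translate)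

theorem norm_lpCompressedTranslation_le (hS : MeasurableSet S) (c : M)
    (f : Lp E p (μ.restrict S)) : ‖lpCompressedTranslation hS c f‖ ≤ ‖f‖ :=
  calc ‖lpCompressedTranslation hS c f‖
      ≤ ‖DomAddAct.mk c +ᵥ lpExtendByZero hS f‖ := norm_Lp_toLp_restrict_le S _
    _ = ‖f‖ := by rw [DomAddAct.norm_vadd_Lp, LinearIsometry.norm_map]

end CompressedTranslation

section Continuity

variable {M X E : Type*} [TopologicalSpace X] [R1Space X] [MeasurableSpace X] [BorelSpace X]
  [TopologicalSpace M] [MeasurableSpace M] [OpensMeasurableSpace M]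
  [VAdd M X] [ContinuousVAdd M X] [NormedAddCommGroup E] [NormedSpace ℝ E]
  {μ : Measure X} [IsLocallyFiniteMeasure μ] [μ.InnerRegularCompactLTTop]
  [VAddInvariantMeasure M X μ] {p : ℝ≥0∞} [Fact (1 ≤ p)] [Fact (p ≠ ∞)] {S : Set X}

theorem continuous_lpCompressedTranslation (hS : MeasurableSet S) :
    Continuous fun cf : M × Lp E p (μ.restrict S) => lpCompressedTranslation hS cf.1 cf.2 :=
  (LpToLpRestrictCLM X E ℝ μ p S).continuous.comp <|
    (DomAddAct.continuous_mk.comp continuous_fst).vadd <|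
      (lpExtendByZero hS).continuous.comp continuous_snd

theorem integrable_lpCompressedTranslation {α : Type*} [MeasurableSpace α] {ν : Measure α}
    (hS : MeasurableSet S) {c : α → M} (hc : AEStronglyMeasurable c ν)
    {f : α → Lp E p (μ.restrict S)} (hf : Integrable f ν) :
    Integrable (fun s => lpCompressedTranslation hS (c s) (f s)) ν := by
  have h_meas : AEStronglyMeasurable (fun s => lpCompressedTranslation hS (c s) (f s)) ν :=
    (continuous_lpCompressedTranslation hS).comp_aestronglyMeasurable₂ hc hf.aestronglyMeasurable
  exact hf.mono h_meas (.of_forall fun s => norm_lpCompressedTranslation_le hS (c s) (f s))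

end Continuity

section NilpotentLeftShift

theorem stronglyMeasurable_uncurry_indicator_translate {E : Type*} [TopologicalSpace E] [Zero E]
    {u : ℝ → ℝ → E} (hu : StronglyMeasurable (Function.uncurry u))
    {S : Set ℝ} (hS : MeasurableSet S) (t : ℝ) :
    StronglyMeasurable (Function.uncurry fun s ξ => S.indicator (u s) (t - s + ξ)) :=
  (hu.indicator (measurable_snd hS)).comp_measurable
    (g := fun sξ : ℝ × ℝ => (sξ.1, t - sξ.1 + sξ.2)) (by fun_prop)

variable {E : Type*} [NormedAddCommGroup E] [NormedSpace ℝ E] {p : ℝ≥0∞} [Fact (1 ≤ p)] {a b : ℝ}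

theorem eq_lpCompressedTranslation_of_coeFn_ae_eq_leftShift {τ : ℝ} (hτ : 0 ≤ τ)
    {f g : Lp E p (volume.restrict (Set.Icc a b))}
    (hg : g =ᵐ[volume.restrict (Set.Icc a b)] fun ξ => if ξ + τ ≤ b then f (ξ + τ) else 0) :
    g = lpCompressedTranslation measurableSet_Icc τ f := by
  refine Lp.ext ?_
  filter_upwards [hg, coeFn_lpCompressedTranslation_of_ae_eq measurableSet_Icc τ (ae_eq_refl f),
    ae_restrict_mem measurableSet_Icc] with ξ hgξ h_translate hξ
  have h_mem : τ +ᵥ ξ ∈ Set.Icc a b ↔ ξ + τ ≤ b := by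
    rw [vadd_eq_add, add_comm, Set.mem_Icc, and_iff_right (by linarith [hξ.1])]
  rw [hgξ, h_translate, Set.indicator_apply, if_congr h_mem rfl rfl, vadd_eq_add, add_comm τ]

theorem setIntegral_Ioc_indicator_Icc_translate {t ξ : ℝ} (ht : 0 ≤ t) (hξ : ξ ∈ Set.Icc a b)
    (u : ℝ → ℝ → E) :
    ∫ s in Set.Ioc 0 t, (Set.Icc a b).indicator (u s) (t - s + ξ) =
      ∫ s in (max (ξ + t - b) 0)..t, u s (ξ + t - s) := by
  have h_indicator : Set.EqOn (fun s => (Set.Icc a b).indicator (u s) (t - s + ξ))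
      ((Set.Ici (ξ + t - b)).indicator fun s => u s (ξ + t - s)) (Set.Ioc 0 t) := by
    intro s hs
    have h_mem : t - s + ξ ∈ Set.Icc a b ↔ s ∈ Set.Ici (ξ + t - b) := by
      rw [Set.mem_Icc, Set.mem_Ici, and_iff_right (by linarith [hs.2, hξ.1])]
      constructor <;> intro h <;> linarith
    have h_arg : t - s + ξ = ξ + t - s := by ring
    simp only [Set.indicator_apply]
    rw [if_congr h_mem rfl rfl, h_arg]
  have h_inter : (Set.Ioc 0 t ∩ Set.Ici (ξ + t - b) : Set ℝ) =ᵐ[volume]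
      Set.Ioc (max (ξ + t - b) 0) t := by
    rw [max_comm, ← Set.Ioc_inter_Ioi]
    exact (Filter.EventuallyEq.refl _ _).inter Ioi_ae_eq_Ici.symm
  rw [setIntegral_congr_fun measurableSet_Ioc h_indicator, setIntegral_indicator measurableSet_Ici,
    setIntegral_congr_set h_inter,
    intervalIntegral.integral_of_le (max_le (by linarith [hξ.2]) ht)]

theorem stmt_3_general [CompleteSpace E] [Fact (p ≠ ∞)]
    {T : ℝ → Lp E p (volume.restrict (Set.Icc a b)) → Lp E p (volume.restrict (Set.Icc a b))}
    (hT : ∀ τ, 0 ≤ τ → ∀ f, T τ f =ᵐ[volume.restrict (Set.Icc a b)]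
      fun ξ => if ξ + τ ≤ b then f (ξ + τ) else 0)
    {t : ℝ} (ht : 0 ≤ t) {u : ℝ → ℝ → E} (hu : StronglyMeasurable (Function.uncurry u))
    {uL : ℝ → Lp E p (volume.restrict (Set.Icc a b))}
    (huL : ∀ᵐ s ∂volume.restrict (Set.Ioc 0 t), uL s =ᵐ[volume.restrict (Set.Icc a b)] u s)
    (hint : IntervalIntegrable uL volume 0 t) :
    (∫ s in (0 : ℝ)..t, T (t - s) (uL s) : Lp E p (volume.restrict (Set.Icc a b)))
      =ᵐ[volume.restrict (Set.Icc a b)]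
        fun ξ => ∫ s in (max (ξ + t - b) 0)..t, u s (ξ + t - s) := by
  let F : ℝ → Lp E p (volume.restrict (Set.Icc a b)) := fun s =>
    lpCompressedTranslation measurableSet_Icc (t - s) (uL s)
  have hTF : ∫ s in (0 : ℝ)..t, T (t - s) (uL s) = ∫ s in Set.Ioc 0 t, F s := by
    rw [intervalIntegral.integral_of_le ht]
    exact setIntegral_congr_fun measurableSet_Ioc fun s hs =>
      eq_lpCompressedTranslation_of_coeFn_ae_eq_leftShift (sub_nonneg.2 hs.2)
        (hT _ (sub_nonneg.2 hs.2) (uL s))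
  have hF_int : IntegrableOn F (Set.Ioc 0 t) :=
    integrable_lpCompressedTranslation measurableSet_Icc
      (continuous_const.sub continuous_id).aestronglyMeasurable hint.1
  have hF_coe : ∀ᵐ s ∂volume.restrict (Set.Ioc 0 t), F s =ᵐ[volume.restrict (Set.Icc a b)]
      fun ξ => (Set.Icc a b).indicator (u s) (t - s + ξ) := by
    filter_upwards [huL] with s hs
    exact coeFn_lpCompressedTranslation_of_ae_eq measurableSet_Icc (t - s) hs
  rw [hTF]
  filter_upwards [coeFn_integral_Lp_ae_eq hF_int
      (stronglyMeasurable_uncurry_indicator_translate hu measurableSet_Icc t).aestronglyMeasurable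
      hF_coe, ae_restrict_mem measurableSet_Icc] with ξ h_eval hξ
  rw [h_eval, setIntegral_Ioc_indicator_Icc_translate ht hξ u]

end NilpotentLeftShift

/-- For the nilpotent left-shift semigroup `T` on `L²([0,1],ℝ)` (given by
`(T t f) ξ = f (ξ + t)` if `ξ + t ≤ 1` and `0` otherwise), the Bochner integral
`∫₀ᵗ T (t-s) u(s,·) ds` equals, as an element of `L²([0,1],ℝ)`, the function
`ξ ↦ ∫_{max (ξ+t-1) 0}^{t} u (s, ξ+t-s) ds`. -/
theorem stmt_3
    (μ : Measure ℝ) (hμ : μ = volume.restrict (Set.Icc (0:ℝ) 1))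
    (T : ℝ → Lp ℝ 2 μ →L[ℝ] Lp ℝ 2 μ)
    (hT : ∀ t, 0 ≤ t → ∀ f : Lp ℝ 2 μ,
      (T t f : ℝ → ℝ) =ᵐ[μ] fun ξ => if ξ + t ≤ 1 then (f : ℝ → ℝ) (ξ + t) else 0)
    (t : ℝ) (ht : 0 ≤ t)
    (u : ℝ → ℝ → ℝ) (hu : Measurable (Function.uncurry u))
    (uL : ℝ → Lp ℝ 2 μ) (huL : ∀ s, (uL s : ℝ → ℝ) =ᵐ[μ] u s)
    (hint : IntervalIntegrable uL volume 0 t) :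
    ((∫ s in (0:ℝ)..t, T (t - s) (uL s) : Lp ℝ 2 μ) : ℝ → ℝ) =ᵐ[μ]
      fun ξ => ∫ s in (max (ξ + t - 1) 0)..t, u s (ξ + t - s) := by
  subst hμ
  have : Fact ((2 : ℝ≥0∞) ≠ ∞) := ⟨ENNReal.ofNat_ne_top⟩
  exact stmt_3_general hT ht hu.stronglyMeasurable (.of_forall huL) hint
end

section
/- Let X and Y be Banach spaces, let (T(t))_{t≥0} be a strongly continuous semigroup of bounded linear operators on X, and let C : X → Y be a bounded linear operator which is infinite-time L¹-observation-admissible with constant κ, i.e. ∫₀^∞ ‖C(T(t)x)‖_Y dt ≤ κ‖x‖_X for all x ∈ X. Then for every Bochner-integrable u ∈ L¹([0,∞),X), the function t ↦ C(∫₀ᵗ T(t−s) u(s) ds) lies in L¹([0,∞),Y) and ∫₀^∞ ‖C(∫₀ᵗ T(t−s) u(s) ds)‖_Y dt ≤ κ ∫₀^∞ ‖u(s)‖_X ds. -/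
open MeasureTheory

/-!
Extended by zero to the whole line, `∫₀ᵗ T(t-s) u(s) ds` is a convolution of an operator-valued
kernel with `u`. Moving `C` and the norm inside the integral, exchanging the order of integration
and translating the inner variable gives
`∫ ‖C (∫ T(t-s) u(s) ds)‖ dt ≤ ∫ (∫ ‖C (T(t) u(s))‖ dt) ds ≤ κ ∫ ‖u(s)‖ ds`,
where admissibility is applied to each vector `x = u(s)` separately. The kernel is only strongly
measurable, not measurable in operator norm, so the joint measurability behind Tonelli's theorem
comes from approximating `u` by simple functions.
-/

section

open scoped ENNReal NNReal

variable {E F Y : Type*} [NormedAddCommGroup E] [NormedSpace ℝ E]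
  [NormedAddCommGroup F] [NormedSpace ℝ F] [NormedAddCommGroup Y] [NormedSpace ℝ Y]

section Operators

variable {α : Type*} [MeasurableSpace α] {μ : Measure α}

theorem aestronglyMeasurable_clm_apply_of_forall {L : α → E →L[ℝ] F}
    (hL : ∀ x, AEStronglyMeasurable (fun a => L a x) μ) {v : α → E}
    (hv : AEStronglyMeasurable v μ) : AEStronglyMeasurable (fun a => L a (v a)) μ := by
  suffices of_stronglyMeasurable : ∀ w : α → E, StronglyMeasurable w →
      AEStronglyMeasurable (fun a => L a (w a)) μ by
    refine (of_stronglyMeasurable (hv.mk v) hv.stronglyMeasurable_mk).congr ?_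
    filter_upwards [hv.ae_eq_mk] with a ha
    rw [ha]
  intro w hw
  induction w, hw using StronglyMeasurable.induction with
  | @ind c s hs =>
    refine ((hL c).indicator hs).congr (.of_forall fun a => ?_)
    by_cases ha : a ∈ s <;> simp [ha]
  | add _ _ _ _ hLf hLg => simpa only [Pi.add_apply, map_add] using hLf.fun_add hLg
  | lim _ _ hLf hlim =>
    exact aestronglyMeasurable_of_tendsto_ae _ hLf
      (.of_forall fun a => ((L a).continuous.tendsto _).comp (hlim a))

theorem enorm_clm_integral_le_lintegral_enorm [CompleteSpace F] (C : F →L[ℝ] Y) (f : α → F) :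
    ‖C (∫ a, f a ∂μ)‖ₑ ≤ ∫⁻ a, ‖C (f a)‖ₑ ∂μ := by
  by_cases hf : Integrable f μ
  · -- `Y` may be incomplete, so the integral of `C ∘ f` is taken in its completion.
    let ι : Y →L[ℝ] UniformSpace.Completion Y := UniformSpace.Completion.toComplL
    have enorm_ι (y : Y) : ‖ι y‖ₑ = ‖y‖ₑ := UniformSpace.Completion.enorm_coe y
    calc ‖C (∫ a, f a ∂μ)‖ₑ = ‖∫ a, (ι ∘L C) (f a) ∂μ‖ₑ := by
          rw [(ι ∘L C).integral_comp_comm hf, ContinuousLinearMap.comp_apply, enorm_ι]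
      _ ≤ ∫⁻ a, ‖(ι ∘L C) (f a)‖ₑ ∂μ := enorm_integral_le_lintegral_enorm _
      _ = ∫⁻ a, ‖C (f a)‖ₑ ∂μ := by simp only [ContinuousLinearMap.comp_apply, enorm_ι]
  · simp [integral_undef hf]

end Operators

section Convolution

variable {G : Type*} [AddGroup G] [MeasurableSpace G]

/-- The convolution `t ↦ ∫ K(t - s) f(s) dμ(s)` of an operator-valued kernel `K` with a
vector-valued function `f`. Mathlib's `MeasureTheory.convolution` is not used because its API asks
for kernels that are measurable in operator norm. The value is `0` at those `t` for which the
integrand is not integrable. -/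
noncomputable def operatorConvolution (K : G → E →L[ℝ] F) (f : G → E) (μ : Measure G) (t : G) : F :=
  ∫ s, K (t - s) (f s) ∂μ

variable [MeasurableAdd₂ G] [MeasurableNeg G] {μ : Measure G} [SFinite μ] [μ.IsAddRightInvariant]
  {K : G → E →L[ℝ] F} {f : G → E}

theorem aestronglyMeasurable_operatorConvolution_integrand
    (hK : ∀ x, AEStronglyMeasurable (fun t => K t x) μ) (hf : AEStronglyMeasurable f μ) :
    AEStronglyMeasurable (fun p : G × G => K (p.1 - p.2) (f p.2)) (μ.prod μ) :=
  aestronglyMeasurable_clm_apply_of_forall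
    (fun x => (hK x).comp_fst.comp_measurePreserving (measurePreserving_sub_prod μ μ))
    hf.comp_snd

theorem aestronglyMeasurable_operatorConvolution
    (hK : ∀ x, AEStronglyMeasurable (fun t => K t x) μ) (hf : AEStronglyMeasurable f μ) :
    AEStronglyMeasurable (operatorConvolution K f μ) μ :=
  (aestronglyMeasurable_operatorConvolution_integrand hK hf).integral_prod_right'

variable [CompleteSpace F] {C : F →L[ℝ] Y}

theorem lintegral_enorm_clm_operatorConvolution_le
    (hK : ∀ x, AEStronglyMeasurable (fun t => K t x) μ) (hf : AEStronglyMeasurable f μ)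
    {κ : ℝ≥0∞} (hCK : ∀ x, ∫⁻ t, ‖C (K t x)‖ₑ ∂μ ≤ κ * ‖x‖ₑ) :
    ∫⁻ t, ‖C (operatorConvolution K f μ t)‖ₑ ∂μ ≤ κ * ∫⁻ s, ‖f s‖ₑ ∂μ := by
  have hmeas : AEMeasurable (fun p : G × G => ‖C (K (p.1 - p.2) (f p.2))‖ₑ) (μ.prod μ) :=
    (C.continuous.comp_aestronglyMeasurable
      (aestronglyMeasurable_operatorConvolution_integrand hK hf)).enorm
  calc ∫⁻ t, ‖C (operatorConvolution K f μ t)‖ₑ ∂μ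
      ≤ ∫⁻ t, ∫⁻ s, ‖C (K (t - s) (f s))‖ₑ ∂μ ∂μ :=
        lintegral_mono fun t => enorm_clm_integral_le_lintegral_enorm C _
    _ = ∫⁻ s, ∫⁻ t, ‖C (K (t - s) (f s))‖ₑ ∂μ ∂μ := lintegral_lintegral_swap hmeas
    _ = ∫⁻ s, ∫⁻ t, ‖C (K t (f s))‖ₑ ∂μ ∂μ :=
        lintegral_congr fun s => lintegral_sub_right_eq_self (fun t => ‖C (K t (f s))‖ₑ) s
    _ ≤ ∫⁻ s, κ * ‖f s‖ₑ ∂μ := lintegral_mono fun s => hCK (f s)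
    _ = κ * ∫⁻ s, ‖f s‖ₑ ∂μ := lintegral_const_mul'' κ hf.enorm

theorem integrable_clm_operatorConvolution
    (hK : ∀ x, AEStronglyMeasurable (fun t => K t x) μ) (hf : Integrable f μ)
    {κ : ℝ≥0} (hCK : ∀ x, ∫⁻ t, ‖C (K t x)‖ₑ ∂μ ≤ κ * ‖x‖ₑ) :
    Integrable (fun t => C (operatorConvolution K f μ t)) μ :=
  ⟨C.continuous.comp_aestronglyMeasurable
      (aestronglyMeasurable_operatorConvolution hK hf.aestronglyMeasurable),
    (lintegral_enorm_clm_operatorConvolution_le hK hf.aestronglyMeasurable hCK).trans_lt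
      (ENNReal.mul_lt_top ENNReal.coe_lt_top hf.hasFiniteIntegral)⟩

theorem integral_norm_clm_operatorConvolution_le
    (hK : ∀ x, AEStronglyMeasurable (fun t => K t x) μ) (hf : Integrable f μ)
    {κ : ℝ≥0} (hCK : ∀ x, ∫⁻ t, ‖C (K t x)‖ₑ ∂μ ≤ κ * ‖x‖ₑ) :
    ∫ t, ‖C (operatorConvolution K f μ t)‖ ∂μ ≤ κ * ∫ s, ‖f s‖ ∂μ := by
  have hint := integrable_clm_operatorConvolution hK hf hCK
  rw [integral_norm_eq_lintegral_enorm hint.aestronglyMeasurable,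
    integral_norm_eq_lintegral_enorm hf.aestronglyMeasurable, ← ENNReal.coe_toReal,
    ← ENNReal.toReal_mul]
  exact ENNReal.toReal_mono (ENNReal.mul_lt_top ENNReal.coe_lt_top hf.hasFiniteIntegral).ne
    (lintegral_enorm_clm_operatorConvolution_le hK hf.aestronglyMeasurable hCK)

end Convolution

section HalfLine

theorem indicator_clm_apply {α : Type*} (s : Set α) (T : α → E →L[ℝ] F) (a : α) (x : E) :
    s.indicator T a x = s.indicator (fun b => T b x) a := by
  by_cases ha : a ∈ s <;> simp [ha]

theorem operatorConvolution_indicator_Ici (T : ℝ → E →L[ℝ] F) (u : ℝ → E) :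
    operatorConvolution ((Set.Ici 0).indicator T) ((Set.Ici 0).indicator u) volume =
      (Set.Ici 0).indicator fun t => ∫ s in (0 : ℝ)..t, T (t - s) (u s) := by
  ext t
  have integrand_eq : (fun s => (Set.Ici 0).indicator T (t - s) ((Set.Ici 0).indicator u s)) =
      (Set.Icc 0 t).indicator fun s => T (t - s) (u s) := by
    ext s
    by_cases hs : 0 ≤ s <;> by_cases hst : s ≤ t <;> simp [hs, hst]
  rw [operatorConvolution, integrand_eq, integral_indicator measurableSet_Icc]
  by_cases ht : 0 ≤ t
  · rw [Set.indicator_of_mem (Set.mem_Ici.2 ht), intervalIntegral.integral_of_le ht,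
      integral_Icc_eq_integral_Ioc]
  · simp [ht]

theorem exists_norm_le_of_continuousOn_apply {α : Type*} [TopologicalSpace α] [CompleteSpace E]
    {T : α → E →L[ℝ] F} {k : Set α} (hk : IsCompact k)
    (hT : ∀ x, ContinuousOn (fun t => T t x) k) : ∃ M, ∀ t ∈ k, ‖T t‖ ≤ M := by
  obtain ⟨M, hM⟩ := banach_steinhaus (g := fun t : k => T t) fun x => by
    obtain ⟨c, hc⟩ := hk.exists_bound_of_continuousOn (hT x)
    exact ⟨c, fun t => hc t t.2⟩
  exact ⟨M, fun t ht => hM ⟨t, ht⟩⟩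

theorem intervalIntegrable_clm_sub_apply [CompleteSpace E] {T : ℝ → E →L[ℝ] F}
    {t : ℝ} (ht : 0 ≤ t) (hT : ∀ x, ContinuousOn (fun r => T r x) (Set.Icc 0 t)) {u : ℝ → E}
    (hu : IntervalIntegrable u volume 0 t) :
    IntervalIntegrable (fun s => T (t - s) (u s)) volume 0 t := by
  have hTt : ∀ x, ContinuousOn (fun s => T (t - s) x) (Set.Icc 0 t) := fun x =>
    (hT x).comp (by fun_prop) fun s hs => ⟨sub_nonneg.2 hs.2, sub_le_self t hs.1⟩
  obtain ⟨M, hM⟩ := exists_norm_le_of_continuousOn_apply isCompact_Icc hTt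
  rw [intervalIntegrable_iff_integrableOn_Icc_of_le ht] at hu ⊢
  refine (hu.norm.const_mul M).mono' (aestronglyMeasurable_clm_apply_of_forall
    (fun x => (hTt x).aestronglyMeasurable measurableSet_Icc) hu.aestronglyMeasurable) ?_
  filter_upwards [ae_restrict_mem measurableSet_Icc] with s hs
  exact (T (t - s)).le_of_opNorm_le (hM s hs) (u s)

end HalfLine

theorem stmt_6_general [CompleteSpace E] [CompleteSpace F] (T : ℝ → E →L[ℝ] F)
    (hTcont : ∀ x : E, ContinuousOn (fun t => T t x) (Set.Ici 0))
    (C : F →L[ℝ] Y) (κ : ℝ) (hκ : 0 ≤ κ)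
    (hadm : ∀ x : E, ∫⁻ t in Set.Ici (0 : ℝ), ‖C (T t x)‖ₑ ≤ ENNReal.ofReal (κ * ‖x‖))
    (u : ℝ → E) (hu : IntegrableOn u (Set.Ici 0)) :
    (∀ t, 0 ≤ t → IntervalIntegrable (fun s => T (t - s) (u s)) volume 0 t) ∧
    IntegrableOn (fun t => C (∫ s in (0 : ℝ)..t, T (t - s) (u s))) (Set.Ici 0) ∧
    ∫ t in Set.Ici (0 : ℝ), ‖C (∫ s in (0 : ℝ)..t, T (t - s) (u s))‖ ≤
      κ * ∫ s in Set.Ici (0 : ℝ), ‖u s‖ := by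
  lift κ to ℝ≥0 using hκ
  have hK : ∀ x, AEStronglyMeasurable (fun t => (Set.Ici 0).indicator T t x) := fun x => by
    simp only [indicator_clm_apply]
    exact (aestronglyMeasurable_indicator_iff measurableSet_Ici).2
      ((hTcont x).aestronglyMeasurable measurableSet_Ici)
  have hCK : ∀ x, ∫⁻ t, ‖C ((Set.Ici 0).indicator T t x)‖ₑ ≤ κ * ‖x‖ₑ := fun x => by
    simpa only [indicator_clm_apply, map_indicator, Function.comp_def,
      enorm_indicator_eq_indicator_enorm, lintegral_indicator measurableSet_Ici,
      ENNReal.ofReal_mul κ.coe_nonneg, ENNReal.ofReal_coe_nnreal, ofReal_norm] using hadm x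
  have hf := hu.integrable_indicator measurableSet_Ici
  have hint := integrable_clm_operatorConvolution hK hf hCK
  have hle := integral_norm_clm_operatorConvolution_le hK hf hCK
  simp only [operatorConvolution_indicator_Ici, map_indicator, Function.comp_def,
    norm_indicator_eq_indicator_norm, integral_indicator measurableSet_Ici,
    integrable_indicator_iff measurableSet_Ici] at hint hle
  refine ⟨fun t ht => intervalIntegrable_clm_sub_apply ht
    (fun x => (hTcont x).mono Set.Icc_subset_Ici_self) ?_, hint, hle⟩
  exact (intervalIntegrable_iff_integrableOn_Icc_of_le ht).2 (hu.mono_set Set.Icc_subset_Ici_self)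

end

/-- If `C` is a bounded operator which is infinite-time `L¹`-observation-admissible with
constant `κ` for a `C₀`-semigroup `T` on `X`, then for every Bochner-integrable input
`u ∈ L¹([0,∞),X)` the function `t ↦ C (∫₀ᵗ T(t-s) u(s) ds)` lies in `L¹([0,∞),Y)` with
`∫₀^∞ ‖C (∫₀ᵗ T(t-s) u(s) ds)‖ dt ≤ κ ∫₀^∞ ‖u(s)‖ ds`. -/
theorem stmt_6 {X Y : Type*} [NormedAddCommGroup X] [NormedSpace ℝ X] [CompleteSpace X]
    [NormedAddCommGroup Y] [NormedSpace ℝ Y] [CompleteSpace Y]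
    (T : ℝ → X →L[ℝ] X)
    (hT0 : T 0 = 1)
    (hTadd : ∀ s t : ℝ, 0 ≤ s → 0 ≤ t → T (s + t) = (T s).comp (T t))
    (hTcont : ∀ x : X, ContinuousOn (fun t => T t x) (Set.Ici 0))
    (C : X →L[ℝ] Y) (κ : ℝ) (hκ : 0 ≤ κ)
    (hadm : ∀ x : X,
      ∫⁻ t in Set.Ici (0:ℝ), (‖C (T t x)‖₊ : ENNReal) ≤ ENNReal.ofReal (κ * ‖x‖))
    (u : ℝ → X) (hu : IntegrableOn u (Set.Ici 0)) :
    IntegrableOn (fun t => C (∫ s in (0:ℝ)..t, T (t - s) (u s))) (Set.Ici 0) ∧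
    ∫ t in Set.Ici (0:ℝ), ‖C (∫ s in (0:ℝ)..t, T (t - s) (u s))‖ ≤
      κ * ∫ s in Set.Ici (0:ℝ), ‖u s‖ := by
  exact (stmt_6_general T hTcont C κ hκ hadm u hu).2
end

section
/- Let X and Y be Banach spaces, let (T(t))_{t≥0} be a strongly continuous semigroup of bounded linear operators on X satisfying ‖T(t)‖ ≤ ρ e^{ωt} for all t ≥ 0 and some ρ > 0, ω ∈ ℝ, and let C : X → Y be a bounded linear operator. Suppose there exists c > 0 such that for every Bochner-integrable u ∈ L¹([0,∞),X) one has ∫₀^∞ ‖C(∫₀ᵗ T(t−s) u(s) ds)‖_Y dt ≤ c ∫₀^∞ ‖u(s)‖_X ds. Then for every x ∈ X, ∫₀^∞ ‖C(T(t)x)‖_Y dt ≤ c · ρ · max{1, e^{ω}} · ‖x‖_X; in particular C is infinite-time L¹-observation-admissible for (T(t)). -/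
open MeasureTheory

/-!
Feed the system with the pulse `u = ε⁻¹ T(·)x` on `(0, ε]`. By the semigroup law the integrand
`T (t - s) (u s)` is the constant `ε⁻¹ T(t)x` on the pulse, so the response at every time `t ≥ ε`
is exactly `T(t)x`. The assumed bound therefore controls `∫_ε^∞ ‖C T(t)x‖ dt` by `c` times the
average of `‖T(s)x‖` over `(0, ε]`, and this average tends to `‖T(0)x‖` as `ε → 0`. Since
`‖T(0)x‖ = ‖x‖`, this already gives admissibility with the constant `c`, and the growth bound at
`t = 0` turns it into the constant `c ρ max{1, e^ω}`.
-/

open Filter Set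
open scoped Topology ENNReal

theorem setLIntegral_Ioi_le_of_tendsto {α : Type*} [ConditionallyCompleteLinearOrder α]
    [TopologicalSpace α] [OrderTopology α] [FirstCountableTopology α] [DenselyOrdered α]
    [NoMaxOrder α] [MeasurableSpace α] {μ : Measure α} {f B : α → ℝ≥0∞} {a : α} {b : ℝ≥0∞}
    (hB : Tendsto B (𝓝[>] a) (𝓝 b)) (hf : ∀ ε, a < ε → ∫⁻ t in Ici ε, f t ∂μ ≤ B ε) :
    ∫⁻ t in Ioi a, f t ∂μ ≤ b := by
  have tail_le : ∀ δ, a < δ → ∫⁻ t in Ici δ, f t ∂μ ≤ b := fun δ hδ =>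
    ge_of_tendsto hB <| by
      filter_upwards [Ioo_mem_nhdsGT hδ] with ε hε
      exact (lintegral_mono_set (Ici_subset_Ici.2 hε.2.le)).trans (hf ε hε.1)
  obtain ⟨δ, δ_anti, δ_gt, δ_tendsto⟩ := exists_seq_strictAnti_tendsto a
  have tails_mono : Monotone fun n => Ici (δ n) := fun _ _ hmn =>
    Ici_subset_Ici.2 (δ_anti.antitone hmn)
  rw [← iUnion_Ici_eq_Ioi_of_lt_of_tendsto δ_gt δ_tendsto,
    setLIntegral_iUnion_of_directed _ tails_mono.directed_le]
  exact iSup_le fun n => tail_le _ (δ_gt n)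

theorem tendsto_inv_smul_integral_nhdsGT {E : Type*} [NormedAddCommGroup E] [NormedSpace ℝ E]
    [CompleteSpace E] {f : ℝ → E} {a : ℝ} (hmeas : StronglyMeasurableAtFilter f (𝓝[>] a))
    (hf : ContinuousWithinAt f (Ioi a) a) :
    Tendsto (fun b => (b - a)⁻¹ • ∫ s in a..b, f s) (𝓝[>] a) (𝓝 (f a)) := by
  have right_deriv : HasDerivWithinAt (fun b => ∫ s in a..b, f s) (f a) (Ioi a) a :=
    (intervalIntegral.integral_hasDerivWithinAt_right (s := Ici a) IntervalIntegrable.refl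
      hmeas hf).Ioi_of_Ici
  simpa only [slope_fun_def, intervalIntegral.integral_same, vsub_eq_sub, sub_zero] using
    (hasDerivWithinAt_iff_tendsto_slope' self_notMem_Ioi).1 right_deriv

section Pulse

variable {X : Type*} [NormedAddCommGroup X] [NormedSpace ℝ X]

/-- The input that follows `ε⁻¹ • v` during the time interval `(0, ε]` and vanishes elsewhere.
For an orbit `v` of a semigroup it plays the role of an approximate Dirac impulse at time `0`. -/
noncomputable def pulse (v : ℝ → X) (ε : ℝ) : ℝ → X :=
  indicator (Ioc 0 ε) fun s => ε⁻¹ • v s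

theorem integrable_pulse {v : ℝ → X} {ε : ℝ} (hv : IntegrableOn v (Ioc 0 ε)) :
    Integrable (pulse v ε) :=
  (integrable_indicator_iff measurableSet_Ioc).2 (hv.smul ε⁻¹)

theorem setIntegral_norm_pulse (v : ℝ → X) {ε : ℝ} (hε : 0 ≤ ε) :
    ∫ s in Ici 0, ‖pulse v ε s‖ = ε⁻¹ * ∫ s in 0..ε, ‖v s‖ := by
  have support_subset : Ioc 0 ε ⊆ Ici 0 := fun _ hs => hs.1.le
  simp only [pulse, norm_indicator_eq_indicator_norm]
  rw [setIntegral_indicator measurableSet_Ioc, inter_eq_right.2 support_subset,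
    intervalIntegral.integral_of_le hε]
  simp only [norm_smul, norm_inv, Real.norm_of_nonneg hε, integral_const_mul]

variable [CompleteSpace X] {T : ℝ → X →L[ℝ] X}

theorem integral_semigroup_pulse_orbit
    (hTadd : ∀ s t : ℝ, 0 ≤ s → 0 ≤ t → T (s + t) = (T s).comp (T t)) (x : X)
    {ε t : ℝ} (hε : 0 < ε) (hεt : ε ≤ t) :
    ∫ s in 0..t, T (t - s) (pulse (fun r => T r x) ε s) = T t x := by
  have integrand_eq : EqOn (fun s => T (t - s) (pulse (fun r => T r x) ε s))
      (indicator (Ioc 0 ε) fun _ => ε⁻¹ • T t x) (Ioc 0 t) := by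
    intro s hs
    by_cases hsε : s ∈ Ioc 0 ε
    · have orbit_eq : T (t - s) (T s x) = T t x := by
        rw [← ContinuousLinearMap.comp_apply, ← hTadd _ _ (sub_nonneg.2 hs.2) hs.1.le,
          sub_add_cancel]
      simp only [pulse, indicator_of_mem hsε, map_smul, orbit_eq]
    · simp only [pulse, indicator_of_notMem hsε, map_zero]
  calc ∫ s in 0..t, T (t - s) (pulse (fun r => T r x) ε s)
      = ∫ s in Ioc 0 t, indicator (Ioc 0 ε) (fun _ => ε⁻¹ • T t x) s := by
        rw [intervalIntegral.integral_of_le (hε.le.trans hεt),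
          setIntegral_congr_fun measurableSet_Ioc integrand_eq]
    _ = ∫ _ in Ioc 0 ε, ε⁻¹ • T t x := by
        rw [setIntegral_indicator measurableSet_Ioc,
          inter_eq_right.2 (Ioc_subset_Ioc_right hεt)]
    _ = T t x := by
        rw [setIntegral_const, Real.volume_real_Ioc_of_le hε.le, sub_zero,
          smul_inv_smul₀ hε.ne']

theorem setLIntegral_Ici_orbit_le
    (hTadd : ∀ s t : ℝ, 0 ≤ s → 0 ≤ t → T (s + t) = (T s).comp (T t))
    {g : X → ℝ≥0∞} {c : ℝ}
    (hbound : ∀ u : ℝ → X, IntegrableOn u (Ici 0) →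
      ∫⁻ t in Ici (0 : ℝ), g (∫ s in 0..t, T (t - s) (u s)) ≤
        ENNReal.ofReal (c * ∫ s in Ici 0, ‖u s‖))
    {x : X} {ε : ℝ} (hε : 0 < ε) (hTx : IntegrableOn (fun t => T t x) (Ioc 0 ε)) :
    ∫⁻ t in Ici ε, g (T t x) ≤ ENNReal.ofReal (c * (ε⁻¹ * ∫ s in 0..ε, ‖T s x‖)) := by
  set u := pulse (fun t => T t x) ε
  calc ∫⁻ t in Ici ε, g (T t x)
      = ∫⁻ t in Ici ε, g (∫ s in 0..t, T (t - s) (u s)) :=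
        setLIntegral_congr_fun measurableSet_Ici fun t ht =>
          congrArg g (integral_semigroup_pulse_orbit hTadd x hε ht).symm
    _ ≤ ∫⁻ t in Ici 0, g (∫ s in 0..t, T (t - s) (u s)) :=
        lintegral_mono_set (Ici_subset_Ici.2 hε.le)
    _ ≤ ENNReal.ofReal (c * ∫ s in Ici 0, ‖u s‖) :=
        hbound u (integrable_pulse hTx).integrableOn
    _ = ENNReal.ofReal (c * (ε⁻¹ * ∫ s in 0..ε, ‖T s x‖)) := by
        rw [setIntegral_norm_pulse _ hε.le]

end Pulse

theorem stmt_7_general {X : Type*} [NormedAddCommGroup X] [NormedSpace ℝ X] [CompleteSpace X]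
    (T : ℝ → X →L[ℝ] X)
    (hTadd : ∀ s t : ℝ, 0 ≤ s → 0 ≤ t → T (s + t) = (T s).comp (T t))
    (g : X → ℝ≥0∞) (c : ℝ)
    (hbound : ∀ u : ℝ → X, IntegrableOn u (Ici 0) →
      ∫⁻ t in Ici (0 : ℝ), g (∫ s in 0..t, T (t - s) (u s)) ≤
        ENNReal.ofReal (c * ∫ s in Ici 0, ‖u s‖))
    (x : X) (hTx : ContinuousOn (fun t => T t x) (Ici 0)) :
    ∫⁻ t in Ici (0 : ℝ), g (T t x) ≤ ENNReal.ofReal (c * ‖T 0 x‖) := by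
  have orbit_integrable (ε : ℝ) : IntegrableOn (fun t => T t x) (Ioc 0 ε) :=
    ((hTx.mono Icc_subset_Ici_self).integrableOn_compact isCompact_Icc).mono_set
      Ioc_subset_Icc_self
  have average_tendsto :
      Tendsto (fun ε => ε⁻¹ * ∫ s in 0..ε, ‖T s x‖) (𝓝[>] 0) (𝓝 ‖T 0 x‖) := by
    have norm_cont : ContinuousOn (fun t => ‖T t x‖) (Ioi 0) := (hTx.mono Ioi_subset_Ici_self).norm
    simpa only [sub_zero, smul_eq_mul] using tendsto_inv_smul_integral_nhdsGT
      (norm_cont.stronglyMeasurableAtFilter_nhdsWithin measurableSet_Ioi 0)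
      ((hTx 0 self_mem_Ici).mono Ioi_subset_Ici_self).norm
  rw [← setLIntegral_congr Ioi_ae_eq_Ici]
  exact setLIntegral_Ioi_le_of_tendsto (ENNReal.tendsto_ofReal (average_tendsto.const_mul c))
    fun ε hε => setLIntegral_Ici_orbit_le hTadd hbound hε (orbit_integrable ε)

/-- If a `C₀`-semigroup `T` on `X` satisfies `‖T t‖ ≤ ρ e^{ω t}` and the bounded operator
`C : X → Y` satisfies the `L¹` maximal-regularity-type bound
`∫₀^∞ ‖C (∫₀ᵗ T(t-s) u(s) ds)‖ dt ≤ c ∫₀^∞ ‖u‖` for all `u ∈ L¹([0,∞),X)`, then `C` is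
infinite-time `L¹`-observation-admissible with constant `c · ρ · max 1 (e^ω)`. -/
theorem stmt_7 {X Y : Type*} [NormedAddCommGroup X] [NormedSpace ℝ X] [CompleteSpace X]
    [NormedAddCommGroup Y] [NormedSpace ℝ Y] [CompleteSpace Y]
    (T : ℝ → X →L[ℝ] X)
    (hT0 : T 0 = 1)
    (hTadd : ∀ s t : ℝ, 0 ≤ s → 0 ≤ t → T (s + t) = (T s).comp (T t))
    (hTcont : ∀ x : X, ContinuousOn (fun t => T t x) (Set.Ici 0))
    (ρ ω : ℝ) (hρ : 0 < ρ)
    (hTbound : ∀ t : ℝ, 0 ≤ t → ‖T t‖ ≤ ρ * Real.exp (ω * t))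
    (C : X →L[ℝ] Y) (c : ℝ) (hc : 0 < c)
    (hbound : ∀ u : ℝ → X, IntegrableOn u (Set.Ici 0) →
      ∫⁻ t in Set.Ici (0:ℝ), (‖C (∫ s in (0:ℝ)..t, T (t - s) (u s))‖₊ : ENNReal) ≤
        ENNReal.ofReal (c * ∫ s in Set.Ici (0:ℝ), ‖u s‖)) :
    ∀ x : X, ∫⁻ t in Set.Ici (0:ℝ), (‖C (T t x)‖₊ : ENNReal) ≤
      ENNReal.ofReal (c * ρ * max 1 (Real.exp ω) * ‖x‖) := by
  intro x
  have initial_le : ‖T 0 x‖ ≤ ρ * max 1 (Real.exp ω) * ‖x‖ :=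
    (T 0).le_of_opNorm_le ((hTbound 0 le_rfl).trans (by gcongr; simp)) x
  refine (stmt_7_general T hTadd (fun y => ‖C y‖₊) c hbound x (hTcont x)).trans ?_
  rw [mul_assoc c, mul_assoc c]
  gcongr
end

section
/- Let X and Y be Banach spaces, let (T(t))_{t≥0} be a strongly continuous semigroup of bounded linear operators on X, and let C : X → Y be a bounded linear operator which is infinite-time L¹-observation-admissible with constant κ, i.e. ∫₀^∞ ‖C(T(t)x)‖_Y dt ≤ κ‖x‖_X for all x ∈ X. Then for every h > 0 and every sequence (x_k)_{k≥1} in X with ∑_{k=1}^∞ ‖x_k‖_X < ∞, one has ∑_{n=1}^∞ ‖ ∑_{k=1}^{n} C( ∫₀^h T((n−k)h + τ) x_k dτ ) ‖_Y ≤ κ ∑_{k=1}^∞ ‖x_k‖_X. -/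
open MeasureTheory

/-!
Write the `n`-th summand as a sum over `k ≤ n` and put `m = n - k`. The integral over `[0, h]` of
the translate by `m h` is an integral over `(m h, (m + 1) h]`, and these intervals are disjoint in
`m`. Summing first over `m` and then over `k` therefore yields at most the sum over `k` of the
`L¹`-norms of the observed orbits of the `x k`, each of which is controlled by admissibility.
-/

theorem tsum_sum_antidiagonal {A : Type*} [AddMonoid A] [Finset.HasAntidiagonal A]
    (a : A × A → ENNReal) :
    ∑' n, ∑ p ∈ Finset.HasAntidiagonal.antidiagonal n, a p = ∑' p, a p := by
  rw [← Finset.HasAntidiagonal.sigmaAntidiagonalEquivProd.tsum_eq, ENNReal.tsum_sigma']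
  exact tsum_congr fun n => (Finset.tsum_subtype _ a).symm

theorem tsum_sum_range_succ_sub_eq_tsum_tsum (a : ℕ → ℕ → ENNReal) :
    ∑' n, ∑ k ∈ Finset.range (n + 1), a k (n - k) = ∑' k, ∑' m, a k m := by
  simp_rw [← Finset.Nat.sum_antidiagonal_eq_sum_range_succ]
  rw [tsum_sum_antidiagonal fun p => a p.1 p.2, ENNReal.tsum_prod]

theorem tsum_lintegral_Ioc_succ_le_lintegral_Ioi {α : Type*} [LinearOrder α] [TopologicalSpace α]
    [OrderClosedTopology α] [MeasurableSpace α] [OpensMeasurableSpace α] {u : ℕ → α}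
    (hu : Monotone u) (μ : Measure α) (g : α → ENNReal) :
    ∑' m, ∫⁻ t in Set.Ioc (u m) (u (m + 1)), g t ∂μ ≤ ∫⁻ t in Set.Ioi (u 0), g t ∂μ := by
  simp_rw [← Order.succ_eq_add_one]
  rw [← lintegral_iUnion (fun _ => measurableSet_Ioc) hu.pairwise_disjoint_on_Ioc_succ]
  exact lintegral_mono_set <| Set.iUnion_subset fun m _ ht => (hu m.zero_le).trans_lt ht.1

theorem ofReal_mul_tsum_of_nonneg {ι : Type*} {f : ι → ℝ} (hf_nonneg : ∀ i, 0 ≤ f i)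
    (hf : Summable f) (κ : ℝ) :
    ENNReal.ofReal (κ * ∑' i, f i) = ∑' i, ENNReal.ofReal (κ * f i) := by
  simp_rw [ENNReal.ofReal_mul' (hf_nonneg _), ENNReal.tsum_mul_left,
    ENNReal.ofReal_mul' (tsum_nonneg hf_nonneg), ENNReal.ofReal_tsum_of_nonneg hf_nonneg hf]

section Observation

variable {Z Y : Type*} [NormedAddCommGroup Z] [NormedSpace ℝ Z] [CompleteSpace Z]
  [NormedAddCommGroup Y] [NormedSpace ℝ Y] (C : Z →L[ℝ] Y)

theorem enorm_map_integral_le_lintegral_enorm_map {α : Type*} [MeasurableSpace α] {μ : Measure α}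
    {f : α → Z} (hf : Integrable f μ) : ‖C (∫ t, f t ∂μ)‖ₑ ≤ ∫⁻ t, ‖C (f t)‖ₑ ∂μ := by
  -- Bochner integrals in an incomplete space are junk, so `C ∘ f` is integrated in the completion.
  let ι : Y →L[ℝ] UniformSpace.Completion Y := UniformSpace.Completion.toComplL
  have enorm_ι (y : Y) : ‖ι y‖ₑ = ‖y‖ₑ := UniformSpace.Completion.enorm_coe y
  calc ‖C (∫ t, f t ∂μ)‖ₑ = ‖∫ t, (ι ∘L C) (f t) ∂μ‖ₑ := by
        rw [(ι ∘L C).integral_comp_comm hf, ContinuousLinearMap.comp_apply, enorm_ι]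
    _ ≤ ∫⁻ t, ‖(ι ∘L C) (f t)‖ₑ ∂μ := enorm_integral_le_lintegral_enorm _
    _ = ∫⁻ t, ‖C (f t)‖ₑ ∂μ := by simp_rw [ContinuousLinearMap.comp_apply, enorm_ι]

theorem enorm_map_integral_comp_add_left_le {f : ℝ → Z} {s h : ℝ} (hh : 0 ≤ h)
    (hf : IntegrableOn f (Set.Ioc s (s + h))) :
    ‖C (∫ τ in 0..h, f (s + τ))‖ₑ ≤ ∫⁻ t in Set.Ioc s (s + h), ‖C (f t)‖ₑ := by
  rw [intervalIntegral.integral_comp_add_left, add_zero,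
    intervalIntegral.integral_of_le (le_add_of_nonneg_right hh)]
  exact enorm_map_integral_le_lintegral_enorm_map C hf

theorem tsum_enorm_map_integral_translate_le {f : ℝ → Z}
    (hf : LocallyIntegrableOn f (Set.Ici 0)) {h : ℝ} (hh : 0 ≤ h) :
    ∑' m : ℕ, ‖C (∫ τ in 0..h, f (m * h + τ))‖ₑ ≤ ∫⁻ t in Set.Ici 0, ‖C (f t)‖ₑ := by
  have hmono : Monotone fun m : ℕ => (m : ℝ) * h := Nat.mono_cast.mul_const hh
  have hsucc (m : ℕ) : (m : ℝ) * h + h = ((m + 1 : ℕ) : ℝ) * h := by push_cast; ring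
  have hint (m : ℕ) : IntegrableOn f (Set.Ioc (m * h) (m * h + h)) :=
    (hf.integrableOn_compact_subset
      (Set.Icc_subset_Ici_self.trans (Set.Ici_subset_Ici.2 (by positivity)))
      isCompact_Icc).mono_set Set.Ioc_subset_Icc_self
  calc ∑' m : ℕ, ‖C (∫ τ in 0..h, f (m * h + τ))‖ₑ
      ≤ ∑' m : ℕ, ∫⁻ t in Set.Ioc (m * h) (m * h + h), ‖C (f t)‖ₑ :=
        ENNReal.tsum_le_tsum fun m => enorm_map_integral_comp_add_left_le C hh (hint m)
    _ ≤ ∫⁻ t in Set.Ioi (((0 : ℕ) : ℝ) * h), ‖C (f t)‖ₑ := by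
        simp_rw [hsucc]
        exact tsum_lintegral_Ioc_succ_le_lintegral_Ioi hmono volume _
    _ ≤ ∫⁻ t in Set.Ici 0, ‖C (f t)‖ₑ := by
        rw [Nat.cast_zero, zero_mul]
        exact lintegral_mono_set Set.Ioi_subset_Ici_self

theorem tsum_enorm_sum_map_integral_translate_le {f : ℕ → ℝ → Z}
    (hf : ∀ k, LocallyIntegrableOn (f k) (Set.Ici 0)) {h : ℝ} (hh : 0 ≤ h) :
    ∑' n : ℕ, ‖∑ k ∈ Finset.range (n + 1), C (∫ τ in 0..h, f k ((n - k : ℕ) * h + τ))‖ₑ ≤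
      ∑' k, ∫⁻ t in Set.Ici 0, ‖C (f k t)‖ₑ :=
  calc ∑' n : ℕ, ‖∑ k ∈ Finset.range (n + 1), C (∫ τ in 0..h, f k ((n - k : ℕ) * h + τ))‖ₑ
      ≤ ∑' n : ℕ, ∑ k ∈ Finset.range (n + 1), ‖C (∫ τ in 0..h, f k ((n - k : ℕ) * h + τ))‖ₑ :=
        ENNReal.tsum_le_tsum fun _ => enorm_sum_le _ _
    _ = ∑' k, ∑' m : ℕ, ‖C (∫ τ in 0..h, f k (m * h + τ))‖ₑ :=
        tsum_sum_range_succ_sub_eq_tsum_tsum fun k m => ‖C (∫ τ in 0..h, f k (m * h + τ))‖ₑ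
    _ ≤ ∑' k, ∫⁻ t in Set.Ici 0, ‖C (f k t)‖ₑ :=
        ENNReal.tsum_le_tsum fun k => tsum_enorm_map_integral_translate_le C (hf k) hh

theorem stmt_8_general {X : Type*} [SeminormedAddGroup X] (T : ℝ → X → Z)
    (hT : ∀ x, LocallyIntegrableOn (fun t => T t x) (Set.Ici 0)) (κ : ℝ)
    (hadm : ∀ x, ∫⁻ t in Set.Ici 0, ‖C (T t x)‖ₑ ≤ ENNReal.ofReal (κ * ‖x‖))
    {h : ℝ} (hh : 0 ≤ h) {x : ℕ → X} (hx : Summable fun k => ‖x k‖) :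
    ∑' n : ℕ, ‖∑ k ∈ Finset.range (n + 1),
        C (∫ τ in 0..h, T ((n - k : ℕ) * h + τ) (x k))‖ₑ ≤
      ENNReal.ofReal (κ * ∑' k, ‖x k‖) :=
  calc _ ≤ ∑' k, ∫⁻ t in Set.Ici 0, ‖C (T t (x k))‖ₑ :=
        tsum_enorm_sum_map_integral_translate_le C (fun k => hT (x k)) hh
    _ ≤ ∑' k, ENNReal.ofReal (κ * ‖x k‖) := ENNReal.tsum_le_tsum fun k => hadm (x k)
    _ = ENNReal.ofReal (κ * ∑' k, ‖x k‖) :=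
        (ofReal_mul_tsum_of_nonneg (fun k => norm_nonneg (x k)) hx κ).symm

end Observation

/-- If `C` is infinite-time `L¹`-observation-admissible with constant `κ` for a
`C₀`-semigroup `T` on `X`, then for every `h > 0` and every absolutely summable sequence
`(x_k)` in `X`, `∑_n ‖∑_{k ≤ n} C (∫₀^h T((n-k)h + τ) x_k dτ)‖ ≤ κ ∑_k ‖x_k‖`. -/
theorem stmt_8 {X Y : Type*} [NormedAddCommGroup X] [NormedSpace ℝ X] [CompleteSpace X]
    [NormedAddCommGroup Y] [NormedSpace ℝ Y] [CompleteSpace Y]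
    (T : ℝ → X →L[ℝ] X)
    (hT0 : T 0 = 1)
    (hTadd : ∀ s t : ℝ, 0 ≤ s → 0 ≤ t → T (s + t) = (T s).comp (T t))
    (hTcont : ∀ x : X, ContinuousOn (fun t => T t x) (Set.Ici 0))
    (C : X →L[ℝ] Y) (κ : ℝ) (hκ : 0 ≤ κ)
    (hadm : ∀ x : X,
      ∫⁻ t in Set.Ici (0:ℝ), (‖C (T t x)‖₊ : ENNReal) ≤ ENNReal.ofReal (κ * ‖x‖))
    (h : ℝ) (hh : 0 < h) (x : ℕ → X) (hx : Summable fun k => ‖x k‖) :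
    ∑' n : ℕ, (‖∑ k ∈ Finset.range (n + 1),
        C (∫ τ in (0:ℝ)..h, T (((n - k : ℕ) : ℝ) * h + τ) (x k))‖₊ : ENNReal) ≤
      ENNReal.ofReal (κ * ∑' k : ℕ, ‖x k‖) := by
  exact stmt_8_general C (fun t => T t)
    (fun x => (hTcont x).locallyIntegrableOn measurableSet_Ici) κ hadm hh.le hx
end

section
/- Let X, U, Y be Banach spaces, let (T(t))_{t≥0} be a strongly continuous semigroup of bounded linear operators on X, let B : U → X and D : U → Y be bounded linear operators, and let C : X → Y be a bounded linear operator which is infinite-time L¹-observation-admissible with constant κ, i.e. ∫₀^∞ ‖C(T(t)x)‖_Y dt ≤ κ‖x‖_X for all x ∈ X. Then for every Bochner-integrable u ∈ L¹([0,∞),U), the output y(t) := C(∫₀ᵗ T(t−s) B u(s) ds) + D(u(t)) lies in L¹([0,∞),Y) and satisfies ∫₀^∞ ‖y(t)‖_Y dt ≤ (κ‖B‖ + ‖D‖) ∫₀^∞ ‖u(s)‖_U ds. (Thus a system with bounded input operator, bounded feedthrough, and infinite-time L¹-admissible observation operator is L¹-to-L¹ (LILO) stable.) -/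
open MeasureTheory

/-!
Put `x(t) = ∫₀ᵗ T(t - s) f(s) ds`. Moving `C` and the norm inside the integral and applying Tonelli,
`∫₀^∞ ‖C x(t)‖ dt ≤ ∫₀^∞ ∫ₛ^∞ ‖C T(t - s) f(s)‖ dt ds`. Translating `t` by `s` turns the inner
integral into the one controlled by admissibility, so it is at most `κ ‖f(s)‖`; then `f = B u`.
The joint measurability that Tonelli needs comes from the uniform boundedness principle: a strongly
continuous family is bounded on compact sets, hence jointly continuous.
-/

open Set
open scoped ENNReal

section StronglyContinuousFamily

variable {𝕜 E F : Type*} [NontriviallyNormedField 𝕜]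
  [NormedAddCommGroup E] [NormedSpace 𝕜 E] [CompleteSpace E]
  [NormedAddCommGroup F] [NormedSpace 𝕜 F]

theorem exists_lipschitzWith_of_isCompact_of_continuousOn_apply {α : Type*} [TopologicalSpace α]
    {S : α → E →L[𝕜] F} {s : Set α} (hs : IsCompact s)
    (hS : ∀ x, ContinuousOn (fun a => S a x) s) :
    ∃ K, ∀ a ∈ s, LipschitzWith K (S a) := by
  have pointwise_bound : ∀ x, ∃ c, ∀ a : s, ‖S a x‖ ≤ c := fun x =>
    (hs.exists_bound_of_continuousOn (hS x)).imp fun _ hc a => hc a a.2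
  obtain ⟨M, hM⟩ := banach_steinhaus pointwise_bound
  exact ⟨M.toNNReal, fun a ha =>
    (S a).lipschitz.weaken (NNReal.le_toNNReal_of_coe_le (hM ⟨a, ha⟩))⟩

theorem continuous_uncurry_of_continuous_apply {α : Type*} [TopologicalSpace α]
    [WeaklyLocallyCompactSpace α] {S : α → E →L[𝕜] F} (hS : ∀ x, Continuous fun a => S a x) :
    Continuous fun p : α × E => S p.1 p.2 := by
  refine continuous_iff_continuousAt.2 fun ⟨a, x⟩ => ?_
  obtain ⟨s, hs, hsa⟩ := exists_compact_mem_nhds a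
  obtain ⟨K, hK⟩ :=
    exists_lipschitzWith_of_isCompact_of_continuousOn_apply hs fun y => (hS y).continuousOn
  have continuousOn_prod : ContinuousOn (fun p : α × E => S p.1 p.2) (s ×ˢ univ) :=
    continuousOn_prod_of_continuousOn_lipschitzOnWith' _ K
      (fun b hb => (hK b hb).lipschitzOnWith) fun y _ => (hS y).continuousOn
  exact continuousOn_prod.continuousAt (prod_mem_nhds hsa Filter.univ_mem)

theorem aestronglyMeasurable_apply_of_continuousOn_Ici {β : Type*} [MeasurableSpace β]
    {μ : Measure ℝ} {ν : Measure β} {T : ℝ → E →L[𝕜] F} {a : ℝ}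
    (hT : ∀ x, ContinuousOn (fun t => T t x) (Ici a)) {f : β → E}
    (hf : AEStronglyMeasurable f ν) :
    AEStronglyMeasurable (fun p : ℝ × β => T p.1 (f p.2)) ((μ.restrict (Ici a)).prod ν) := by
  have continuous_extension : Continuous fun p : ℝ × E => T (max p.1 a) p.2 :=
    continuous_uncurry_of_continuous_apply fun x =>
      (hT x).comp_continuous (by fun_prop) fun t => le_max_right t a
  refine (continuous_extension.comp_aestronglyMeasurable
    (measurable_fst.aestronglyMeasurable.prodMk hf.comp_snd)).congr ?_
  filter_upwards [Measure.quasiMeasurePreserving_fst.ae (ae_restrict_mem measurableSet_Ici)]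
    with p hp
  simp only [max_eq_left (mem_Ici.1 hp)]

end StronglyContinuousFamily

section IntegralOverSections

variable {α β E : Type*} [MeasurableSpace α] [MeasurableSpace β] {μ : Measure α} {ν : Measure β}
  [SFinite ν] {A : Set (α × β)}

theorem lintegral_lintegral_section (hA : MeasurableSet A) {g : α × β → ℝ≥0∞}
    (hg : AEMeasurable g ((μ.prod ν).restrict A)) :
    ∫⁻ x, ∫⁻ y in Prod.mk x ⁻¹' A, g (x, y) ∂ν ∂μ = ∫⁻ p in A, g p ∂μ.prod ν := by
  rw [← lintegral_indicator hA, lintegral_prod _ ((aemeasurable_indicator_iff hA).2 hg)]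
  exact lintegral_congr fun x => (lintegral_indicator (measurable_prodMk_left hA) _).symm

theorem aestronglyMeasurable_integral_section [NormedAddCommGroup E] [NormedSpace ℝ E]
    (hA : MeasurableSet A) {g : α × β → E}
    (hg : AEStronglyMeasurable g ((μ.prod ν).restrict A)) :
    AEStronglyMeasurable (fun x => ∫ y in Prod.mk x ⁻¹' A, g (x, y) ∂ν) μ := by
  refine ((aestronglyMeasurable_indicator_iff hA).2 hg).integral_prod_right'.congr ?_
  exact .of_forall fun x => integral_indicator (measurable_prodMk_left hA)

end IntegralOverSections

section Triangle

theorem measurableSet_setOf_snd_mem_Icc_fst :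
    MeasurableSet {p : ℝ × ℝ | p.2 ∈ Icc 0 p.1} :=
  (measurableSet_le measurable_const measurable_snd).inter
    (measurableSet_le measurable_snd measurable_fst)

theorem measurePreserving_sub_prod_restrict_Icc :
    MeasurePreserving (fun p : ℝ × ℝ => (p.1 - p.2, p.2))
      (volume.restrict {p : ℝ × ℝ | p.2 ∈ Icc 0 p.1})
      ((volume.restrict (Ici 0)).prod (volume.restrict (Ici 0))) := by
  have preimage_quadrant : (fun p : ℝ × ℝ => (p.1 - p.2, p.2)) ⁻¹' (Ici 0 ×ˢ Ici 0) =
      {p : ℝ × ℝ | p.2 ∈ Icc 0 p.1} := by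
    ext p
    simp [and_comm]
  rw [Measure.prod_restrict, ← preimage_quadrant]
  exact (measurePreserving_sub_prod volume volume).restrict_preimage
    (measurableSet_Ici.prod measurableSet_Ici)

theorem lintegral_lintegral_Icc_sub {g : ℝ × ℝ → ℝ≥0∞}
    (hg : AEMeasurable g ((volume.restrict (Ici 0)).prod (volume.restrict (Ici 0)))) :
    ∫⁻ t, ∫⁻ s in Icc 0 t, g (t - s, s) = ∫⁻ s in Ici 0, ∫⁻ r in Ici 0, g (r, s) := by
  have shear := measurePreserving_sub_prod_restrict_Icc
  calc ∫⁻ t, ∫⁻ s in Icc 0 t, g (t - s, s)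
      = ∫⁻ p in {p : ℝ × ℝ | p.2 ∈ Icc 0 p.1}, g (p.1 - p.2, p.2) :=
        lintegral_lintegral_section measurableSet_setOf_snd_mem_Icc_fst
          (hg.comp_quasiMeasurePreserving shear.quasiMeasurePreserving)
    _ = ∫⁻ p, g p ∂(volume.restrict (Ici 0)).prod (volume.restrict (Ici 0)) := by
        rw [← shear.map_eq, lintegral_map' (shear.map_eq ▸ hg) shear.aemeasurable]
    _ = ∫⁻ s in Ici 0, ∫⁻ r in Ici 0, g (r, s) := lintegral_prod_symm g hg

end Triangle

section NormEstimates

variable {α E F : Type*} [MeasurableSpace α] {μ : Measure α}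
  [NormedAddCommGroup E] [NormedAddCommGroup F]

theorem lintegral_enorm_apply_le {𝕜 : Type*} [NontriviallyNormedField 𝕜] [NormedSpace 𝕜 E]
    [NormedSpace 𝕜 F] (L : E →L[𝕜] F) (f : α → E) :
    ∫⁻ a, ‖L (f a)‖ₑ ∂μ ≤ ‖L‖ₑ * ∫⁻ a, ‖f a‖ₑ ∂μ := by
  rw [← lintegral_const_mul' _ _ enorm_ne_top]
  exact lintegral_mono fun a => L.le_opENorm (f a)

theorem enorm_apply_integral_le_lintegral_enorm [NormedSpace ℝ E] [CompleteSpace E]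
    [NormedSpace ℝ F] (C : E →L[ℝ] F) (f : α → E) :
    ‖C (∫ a, f a ∂μ)‖ₑ ≤ ∫⁻ a, ‖C (f a)‖ₑ ∂μ := by
  by_cases hf : Integrable f μ
  · -- A Bochner integral in an incomplete space is `0` by convention, so `C ∘ f` is integrated in
    -- the completion of `F`.
    let J : F →ₗᵢ[ℝ] UniformSpace.Completion F := UniformSpace.Completion.toComplₗᵢ
    have enorm_J (y : F) : ‖J y‖ₑ = ‖y‖ₑ := by simp only [enorm, J.nnnorm_map]
    calc ‖C (∫ a, f a ∂μ)‖ₑ = ‖∫ a, J (C (f a)) ∂μ‖ₑ := by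
          rw [← enorm_J]
          exact congrArg _ ((J.toContinuousLinearMap.comp C).integral_comp_comm hf).symm
      _ ≤ ∫⁻ a, ‖J (C (f a))‖ₑ ∂μ := enorm_integral_le_lintegral_enorm _
      _ = ∫⁻ a, ‖C (f a)‖ₑ ∂μ := by simp only [enorm_J]
  · simp [integral_undef hf]

theorem integrable_and_integral_norm_le_of_lintegral_enorm_le {f : α → E} {g : α → F} {c : ℝ}
    (hf : Integrable f μ) (hg : AEStronglyMeasurable g μ) (hc : 0 ≤ c)
    (hgf : ∫⁻ a, ‖g a‖ₑ ∂μ ≤ ENNReal.ofReal c * ∫⁻ a, ‖f a‖ₑ ∂μ) :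
    Integrable g μ ∧ ∫ a, ‖g a‖ ∂μ ≤ c * ∫ a, ‖f a‖ ∂μ := by
  have bound_lt_top : ENNReal.ofReal c * ∫⁻ a, ‖f a‖ₑ ∂μ < ∞ :=
    ENNReal.mul_lt_top ENNReal.ofReal_lt_top hf.2
  refine ⟨⟨hg, hgf.trans_lt bound_lt_top⟩, ?_⟩
  rw [integral_norm_eq_lintegral_enorm hg, integral_norm_eq_lintegral_enorm hf.1,
    ← ENNReal.toReal_ofReal hc, ← ENNReal.toReal_mul]
  exact ENNReal.toReal_mono bound_lt_top.ne hgf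

end NormEstimates

section MildSolution

variable {E F G : Type*} [NormedAddCommGroup E] [NormedSpace ℝ E]
  [NormedAddCommGroup F] [NormedSpace ℝ F]
  [NormedAddCommGroup G] [NormedSpace ℝ G]

/-- The mild solution `t ↦ ∫₀ᵗ T(t - s) f(s) ds` with zero initial state and forcing term `f`.
Here `T` is any family of operators, and only the values at `t ≥ 0` are meaningful. -/
noncomputable def mildSolution (T : ℝ → E →L[ℝ] F) (f : ℝ → E) (t : ℝ) : F :=
  ∫ s in (0 : ℝ)..t, T (t - s) (f s)

theorem mildSolution_eq_integral_Icc (T : ℝ → E →L[ℝ] F) (f : ℝ → E) {t : ℝ} (ht : 0 ≤ t) :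
    mildSolution T f t = ∫ s in Icc 0 t, T (t - s) (f s) := by
  rw [mildSolution, intervalIntegral.integral_of_le ht, integral_Icc_eq_integral_Ioc]

variable [CompleteSpace E] {T : ℝ → E →L[ℝ] F} {f : ℝ → E}

theorem aestronglyMeasurable_mildSolution (hT : ∀ x, ContinuousOn (fun t => T t x) (Ici 0))
    (hf : AEStronglyMeasurable f (volume.restrict (Ici 0))) :
    AEStronglyMeasurable (mildSolution T f) (volume.restrict (Ici 0)) := by
  have kernel : AEStronglyMeasurable (fun p : ℝ × ℝ => T (p.1 - p.2) (f p.2))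
      (volume.restrict {p : ℝ × ℝ | p.2 ∈ Icc 0 p.1}) :=
    (aestronglyMeasurable_apply_of_continuousOn_Ici hT hf).comp_measurePreserving
      measurePreserving_sub_prod_restrict_Icc
  refine (aestronglyMeasurable_integral_section measurableSet_setOf_snd_mem_Icc_fst
    kernel).restrict.congr ?_
  filter_upwards [ae_restrict_mem measurableSet_Ici] with t ht
  exact (mildSolution_eq_integral_Icc T f ht).symm

theorem lintegral_enorm_apply_mildSolution_le [CompleteSpace F]
    (hT : ∀ x, ContinuousOn (fun t => T t x) (Ici 0))
    (hf : AEStronglyMeasurable f (volume.restrict (Ici 0))) {C : F →L[ℝ] G} {K : ℝ≥0∞}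
    (hC : ∀ x, ∫⁻ t in Ici 0, ‖C (T t x)‖ₑ ≤ K * ‖x‖ₑ) :
    ∫⁻ t in Ici 0, ‖C (mildSolution T f t)‖ₑ ≤ K * ∫⁻ s in Ici 0, ‖f s‖ₑ := by
  have kernel := C.continuous.comp_aestronglyMeasurable
    (aestronglyMeasurable_apply_of_continuousOn_Ici (μ := volume) hT hf)
  calc ∫⁻ t in Ici 0, ‖C (mildSolution T f t)‖ₑ
      ≤ ∫⁻ t in Ici 0, ∫⁻ s in Icc 0 t, ‖C (T (t - s) (f s))‖ₑ :=
        setLIntegral_mono' measurableSet_Ici fun t ht => by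
          rw [mildSolution_eq_integral_Icc T f ht]
          exact enorm_apply_integral_le_lintegral_enorm C _
    _ ≤ ∫⁻ t, ∫⁻ s in Icc 0 t, ‖C (T (t - s) (f s))‖ₑ := setLIntegral_le_lintegral _ _
    _ = ∫⁻ s in Ici 0, ∫⁻ r in Ici 0, ‖C (T r (f s))‖ₑ :=
        lintegral_lintegral_Icc_sub kernel.enorm
    _ ≤ ∫⁻ s in Ici 0, K * ‖f s‖ₑ := lintegral_mono fun s => hC (f s)
    _ = K * ∫⁻ s in Ici 0, ‖f s‖ₑ := lintegral_const_mul'' K hf.enorm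

end MildSolution

theorem stmt_13_general {X Z U Y : Type*}
    [NormedAddCommGroup X] [NormedSpace ℝ X] [CompleteSpace X]
    [NormedAddCommGroup Z] [NormedSpace ℝ Z] [CompleteSpace Z]
    [NormedAddCommGroup U] [NormedSpace ℝ U]
    [NormedAddCommGroup Y] [NormedSpace ℝ Y]
    (T : ℝ → X →L[ℝ] Z)
    (hTcont : ∀ x : X, ContinuousOn (fun t => T t x) (Set.Ici 0))
    (B : U →L[ℝ] X) (D : U →L[ℝ] Y) (C : Z →L[ℝ] Y)
    (κ : ℝ) (hκ : 0 ≤ κ)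
    (hadm : ∀ x : X,
      ∫⁻ t in Set.Ici (0:ℝ), (‖C (T t x)‖₊ : ENNReal) ≤ ENNReal.ofReal (κ * ‖x‖))
    (u : ℝ → U) (hu : IntegrableOn u (Set.Ici 0)) :
    IntegrableOn
      (fun t => C (∫ s in (0:ℝ)..t, T (t - s) (B (u s))) + D (u t)) (Set.Ici 0) ∧
    ∫ t in Set.Ici (0:ℝ), ‖C (∫ s in (0:ℝ)..t, T (t - s) (B (u s))) + D (u t)‖ ≤
      (κ * ‖B‖ + ‖D‖) * ∫ s in Set.Ici (0:ℝ), ‖u s‖ := by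
  have hBu := B.continuous.comp_aestronglyMeasurable hu.1
  have hCx := C.continuous.comp_aestronglyMeasurable
    (aestronglyMeasurable_mildSolution hTcont hBu)
  have hDu := D.continuous.comp_aestronglyMeasurable hu.1
  have admissible (x : X) : ∫⁻ t in Ici 0, ‖C (T t x)‖ₑ ≤ ENNReal.ofReal κ * ‖x‖ₑ := by
    rw [← ofReal_norm, ← ENNReal.ofReal_mul hκ]
    exact hadm x
  refine integrable_and_integral_norm_le_of_lintegral_enorm_le hu (hCx.add hDu) (by positivity) ?_
  calc ∫⁻ t in Ici 0, ‖C (mildSolution T (B ∘ u) t) + D (u t)‖ₑ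
      ≤ ∫⁻ t in Ici 0, (‖C (mildSolution T (B ∘ u) t)‖ₑ + ‖D (u t)‖ₑ) :=
        lintegral_mono fun t => enorm_add_le _ _
    _ = (∫⁻ t in Ici 0, ‖C (mildSolution T (B ∘ u) t)‖ₑ) + ∫⁻ t in Ici 0, ‖D (u t)‖ₑ :=
        lintegral_add_left' hCx.enorm _
    _ ≤ ENNReal.ofReal κ * (‖B‖ₑ * ∫⁻ s in Ici 0, ‖u s‖ₑ) + ‖D‖ₑ * ∫⁻ s in Ici 0, ‖u s‖ₑ := by
        gcongr
        · exact (lintegral_enorm_apply_mildSolution_le hTcont hBu admissible).trans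
            (by gcongr; exact lintegral_enorm_apply_le B u)
        · exact lintegral_enorm_apply_le D u
    _ = ENNReal.ofReal (κ * ‖B‖ + ‖D‖) * ∫⁻ s in Ici 0, ‖u s‖ₑ := by
        rw [ENNReal.ofReal_add (by positivity) (by positivity), ENNReal.ofReal_mul hκ,
          ofReal_norm, ofReal_norm, add_mul, mul_assoc]

/-- A system with bounded input operator `B`, bounded feedthrough `D`, and infinite-time
`L¹`-observation-admissible (with constant `κ`) bounded observation operator `C` is
`L¹`-to-`L¹` (LILO) stable: for every `u ∈ L¹([0,∞),U)` the output
`y t = C (∫₀ᵗ T(t-s) B u(s) ds) + D (u t)` is in `L¹([0,∞),Y)` with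
`‖y‖_{L¹} ≤ (κ‖B‖ + ‖D‖) ‖u‖_{L¹}`. -/
theorem stmt_13 {X U Y : Type*}
    [NormedAddCommGroup X] [NormedSpace ℝ X] [CompleteSpace X]
    [NormedAddCommGroup U] [NormedSpace ℝ U] [CompleteSpace U]
    [NormedAddCommGroup Y] [NormedSpace ℝ Y] [CompleteSpace Y]
    (T : ℝ → X →L[ℝ] X)
    (hT0 : T 0 = 1)
    (hTadd : ∀ s t : ℝ, 0 ≤ s → 0 ≤ t → T (s + t) = (T s).comp (T t))
    (hTcont : ∀ x : X, ContinuousOn (fun t => T t x) (Set.Ici 0))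
    (B : U →L[ℝ] X) (D : U →L[ℝ] Y) (C : X →L[ℝ] Y)
    (κ : ℝ) (hκ : 0 ≤ κ)
    (hadm : ∀ x : X,
      ∫⁻ t in Set.Ici (0:ℝ), (‖C (T t x)‖₊ : ENNReal) ≤ ENNReal.ofReal (κ * ‖x‖))
    (u : ℝ → U) (hu : IntegrableOn u (Set.Ici 0)) :
    IntegrableOn
      (fun t => C (∫ s in (0:ℝ)..t, T (t - s) (B (u s))) + D (u t)) (Set.Ici 0) ∧
    ∫ t in Set.Ici (0:ℝ), ‖C (∫ s in (0:ℝ)..t, T (t - s) (B (u s))) + D (u t)‖ ≤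
      (κ * ‖B‖ + ‖D‖) * ∫ s in Set.Ici (0:ℝ), ‖u s‖ :=
  stmt_13_general T hTcont B D C κ hκ hadm u hu
end

section
/- Let X and U be Banach spaces, let (T(t))_{t≥0} be a strongly continuous semigroup of bounded linear operators on X, and let B : U → X be a bounded linear operator. Suppose there exists c > 0 such that for every smooth compactly supported u : (0,∞) → U and every t > 0, ‖∫₀ᵗ T(t−s) B u(s) ds‖_X ≤ c · sup_{s∈[0,t]} ‖u(s)‖_U. Then the same bound holds for every continuous u : [0,∞) → U and every t > 0: ‖∫₀ᵗ T(t−s) B u(s) ds‖_X ≤ c · sup_{s∈[0,t]} ‖u(s)‖_U. (Thus for a system with identity observation and bounded input operator, BIBO stability tested on smooth compactly supported inputs implies the state bound for all continuous inputs, i.e. B is infinite-time C-control-admissible.) -/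
open MeasureTheory

/-!
Banach–Steinhaus bounds the kernel `s ↦ T (t - s) ∘ B` uniformly on `[0, t]`. A continuous input `u`
on `[0, t]` is the pointwise limit on `(0, t)` of smooth inputs `vₙ` compactly supported in `(0, t)`
with `‖vₙ‖ ≤ ‖u‖ + 1 / (n + 1)`: multiply `u` by a plateau function and smooth the product without
enlarging its support. By dominated convergence the bound for the `vₙ` passes to the limit `u`, and
the errors `1 / (n + 1)` disappear, so that the constant `c` is preserved.
-/

open Filter Function Set
open scoped ContDiff Topology

lemma norm_le_biSup_norm_of_continuousOn {α E : Type*} [TopologicalSpace α]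
    [SeminormedAddCommGroup E] {s : Set α} (hs : IsCompact s) {f : α → E} (hf : ContinuousOn f s)
    {a : α} (ha : a ∈ s) : ‖f a‖ ≤ ⨆ b ∈ s, ‖f b‖ := by
  obtain ⟨C, hC⟩ := hs.exists_bound_of_continuousOn hf
  refine le_ciSup₂ (f := fun b (_ : b ∈ s) ↦ ‖f b‖) ⟨C, ?_⟩ a ha
  rintro _ ⟨_, ⟨b, rfl⟩, ⟨hb, rfl⟩⟩
  exact hC b hb

lemma biSup_norm_le_of_support_subset {α E : Type*} [SeminormedAddCommGroup E] {Ω : Set α}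
    (hΩ : Ω.Nonempty) {f : α → E} (hf : support f ⊆ Ω) {R : ℝ} (hR : ∀ a ∈ Ω, ‖f a‖ ≤ R)
    (s : Set α) : ⨆ a ∈ s, ‖f a‖ ≤ R := by
  obtain ⟨b, hb⟩ := hΩ
  have R_nonneg : 0 ≤ R := (norm_nonneg _).trans (hR b hb)
  refine Real.iSup_le (fun a ↦ Real.iSup_le (fun _ ↦ ?_) R_nonneg) R_nonneg
  by_cases ha : a ∈ Ω
  · exact hR a ha
  · simpa [notMem_support.1 (notMem_subset hf ha)] using R_nonneg

section StronglyContinuousFamily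

variable {𝕜 α X Y : Type*} [NontriviallyNormedField 𝕜] [TopologicalSpace α]
  [SeminormedAddCommGroup X] [NormedSpace 𝕜 X] [SeminormedAddCommGroup Y] [NormedSpace 𝕜 Y]
  {G : α → X →L[𝕜] Y} {s : Set α}

lemma exists_opNorm_le_of_continuousOn_apply [CompleteSpace X] (hs : IsCompact s)
    (hG : ∀ x, ContinuousOn (fun a ↦ G a x) s) : ∃ M, ∀ a ∈ s, ‖G a‖ ≤ M := by
  have pointwise_bound (x : X) : ∃ C, ∀ a : s, ‖G a x‖ ≤ C := by
    obtain ⟨C, hC⟩ := hs.exists_bound_of_continuousOn (hG x)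
    exact ⟨C, fun a ↦ hC a a.2⟩
  obtain ⟨M, hM⟩ := banach_steinhaus pointwise_bound
  exact ⟨M, fun a ha ↦ hM ⟨a, ha⟩⟩

lemma continuousOn_apply_of_opNorm_le {M : ℝ} (hG : ∀ x, ContinuousOn (fun a ↦ G a x) s)
    (hM : ∀ a ∈ s, ‖G a‖ ≤ M) {f : α → X} (hf : ContinuousOn f s) :
    ContinuousOn (fun a ↦ G a (f a)) s := by
  intro a ha
  have frozen_argument : Tendsto (fun b ↦ G b (f a)) (𝓝[s] a) (𝓝 (G a (f a))) := hG (f a) a ha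
  have increment : Tendsto (fun b ↦ G b (f b - f a)) (𝓝[s] a) (𝓝 0) := by
    have hfa : Tendsto (fun b ↦ M * ‖f b - f a‖) (𝓝[s] a) (𝓝 0) := by
      simpa using (tendsto_iff_norm_sub_tendsto_zero.1 (hf a ha)).const_mul M
    refine squeeze_zero_norm' ?_ hfa
    filter_upwards [self_mem_nhdsWithin] with b hb
    exact (G b).le_of_opNorm_le (hM b hb) _
  simpa [ContinuousWithinAt] using frozen_argument.add increment

end StronglyContinuousFamily

section SmoothApproximation

variable {E F : Type*} [NormedAddCommGroup E] [NormedSpace ℝ E] [FiniteDimensional ℝ E]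
  [NormedAddCommGroup F] [NormedSpace ℝ F] {Ω : Set E} {u : E → F}

lemma exists_contDiff_tsupport_subset_dist_lt_on_compact (hΩ : IsOpen Ω) (hu : ContinuousOn u Ω)
    {K : Set E} (hK : IsCompact K) (hKΩ : K ⊆ Ω) {ε : ℝ} (hε : 0 < ε) :
    ∃ v : E → F, ContDiff ℝ ∞ v ∧ HasCompactSupport v ∧ tsupport v ⊆ Ω ∧
      (∀ x ∈ K, dist (v x) (u x) < ε) ∧ ∀ x, ‖v x‖ ≤ ‖u x‖ + ε := by
  obtain ⟨χ, χ_eq_one, χ_compact, χ_tsupport, χ_mem⟩ :=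
    exists_continuousMap_one_of_isCompact_subset_isOpen hK hΩ hKΩ
  have product_continuous : Continuous fun x ↦ χ x • u x :=
    (χ.continuous.continuousOn.smul hu).continuous_of_tsupport_subset hΩ
      ((tsupport_smul_subset_left χ u).trans χ_tsupport)
  obtain ⟨v, v_contDiff, v_dist, v_support⟩ :=
    product_continuous.exists_contDiff_approx ⊤ continuous_const fun _ ↦ hε
  have v_tsupport : tsupport v ⊆ tsupport χ :=
    closure_mono (v_support.trans (support_smul_subset_left χ u))
  refine ⟨v, v_contDiff, χ_compact.of_isClosed_subset (isClosed_tsupport v) v_tsupport,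
    v_tsupport.trans χ_tsupport, fun x hx ↦ ?_, fun x ↦ ?_⟩
  · simpa [χ_eq_one hx] using v_dist x
  · have product_le : ‖χ x • u x‖ ≤ ‖u x‖ := by
      rw [norm_smul, Real.norm_of_nonneg (χ_mem x).1]
      exact mul_le_of_le_one_left (norm_nonneg _) (χ_mem x).2
    have v_le : ‖v x‖ ≤ ‖χ x • u x‖ + ε :=
      (norm_le_norm_add_norm_sub' _ _).trans (by gcongr; exact (dist_eq_norm (v x) _ ▸ v_dist x).le)
    linarith

lemma exists_seq_contDiff_tsupport_subset_tendsto (hΩ : IsOpen Ω) (hu : ContinuousOn u Ω) :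
    ∃ v : ℕ → E → F, (∀ n, ContDiff ℝ ∞ (v n)) ∧ (∀ n, HasCompactSupport (v n)) ∧
      (∀ n, tsupport (v n) ⊆ Ω) ∧ (∀ n x, ‖v n x‖ ≤ ‖u x‖ + 1 / ((n : ℝ) + 1)) ∧
      ∀ x ∈ Ω, Tendsto (fun n ↦ v n x) atTop (𝓝 (u x)) := by
  have : LocallyCompactSpace Ω := hΩ.locallyCompactSpace
  let K : CompactExhaustion Ω := default
  have approx (n : ℕ) := exists_contDiff_tsupport_subset_dist_lt_on_compact hΩ hu
    ((K.isCompact n).image continuous_subtype_val) (Subtype.coe_image_subset Ω (K n))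
    (Nat.one_div_pos_of_nat (α := ℝ) (n := n))
  choose v v_contDiff v_compact v_tsupport v_dist v_norm using approx
  refine ⟨v, v_contDiff, v_compact, v_tsupport, v_norm, fun x hx ↦ ?_⟩
  obtain ⟨N, hN⟩ := K.exists_mem ⟨x, hx⟩
  refine tendsto_iff_dist_tendsto_zero.2 <| squeeze_zero' (.of_forall fun _ ↦ dist_nonneg) ?_
    tendsto_one_div_add_atTop_nhds_zero_nat
  filter_upwards [eventually_ge_atTop N] with n hn
  exact (v_dist n x ⟨⟨x, hx⟩, K.subset hn hN, rfl⟩).le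

end SmoothApproximation

section Density

variable {E U Y : Type*} [NormedAddCommGroup E] [NormedSpace ℝ E] [FiniteDimensional ℝ E]
  [MeasurableSpace E] [BorelSpace E] [NormedAddCommGroup U] [NormedSpace ℝ U]
  [NormedAddCommGroup Y] [NormedSpace ℝ Y]

theorem norm_setIntegral_apply_le_of_forall_contDiff {μ : Measure E} {Ω : Set E} (hΩ : IsOpen Ω)
    (hμ : μ Ω ≠ ⊤) {G : E → U →L[ℝ] Y} (hG : ∀ x, ContinuousOn (fun a ↦ G a x) Ω) {M : ℝ}
    (hM : ∀ a ∈ Ω, ‖G a‖ ≤ M) {c : ℝ}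
    (hsmooth : ∀ v : E → U, ContDiff ℝ ∞ v → HasCompactSupport v → tsupport v ⊆ Ω →
      ∀ R, (∀ a ∈ Ω, ‖v a‖ ≤ R) → ‖∫ a in Ω, G a (v a) ∂μ‖ ≤ c * R)
    {u : E → U} (hu : ContinuousOn u Ω) {R : ℝ} (hR : ∀ a ∈ Ω, ‖u a‖ ≤ R) :
    ‖∫ a in Ω, G a (u a) ∂μ‖ ≤ c * R := by
  obtain ⟨v, v_contDiff, v_compact, v_tsupport, v_norm, v_tendsto⟩ :=
    exists_seq_contDiff_tsupport_subset_tendsto hΩ hu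
  have v_le (n : ℕ) : ∀ a ∈ Ω, ‖v n a‖ ≤ R + 1 / ((n : ℝ) + 1) := fun a ha ↦
    (v_norm n a).trans (by gcongr; exact hR a ha)
  have integral_tendsto : Tendsto (fun n ↦ ∫ a in Ω, G a (v n a) ∂μ) atTop
      (𝓝 (∫ a in Ω, G a (u a) ∂μ)) := by
    refine tendsto_integral_of_dominated_convergence (fun _ ↦ M * (R + 1)) (fun n ↦ ?_)
      (integrableOn_const hμ) (fun n ↦ ?_) ?_
    · exact (continuousOn_apply_of_opNorm_le hG hM
        (v_contDiff n).continuous.continuousOn).aestronglyMeasurable hΩ.measurableSet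
    · filter_upwards [ae_restrict_mem hΩ.measurableSet] with a ha
      refine (G a).le_of_opNorm_le_of_le (hM a ha) ((v_le n a ha).trans ?_)
      gcongr
      exact div_le_one_of_le₀ (by simp) (by positivity)
    · filter_upwards [ae_restrict_mem hΩ.measurableSet] with a ha
      exact ((G a).continuous.tendsto _).comp (v_tendsto a ha)
  have bound_tendsto : Tendsto (fun n : ℕ ↦ c * (R + 1 / ((n : ℝ) + 1))) atTop (𝓝 (c * R)) := by
    simpa using (tendsto_one_div_add_atTop_nhds_zero_nat.const_add R).const_mul c
  exact le_of_tendsto_of_tendsto' integral_tendsto.norm bound_tendsto fun n ↦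
    hsmooth (v n) (v_contDiff n) (v_compact n) (v_tsupport n) _ (v_le n)

end Density

theorem stmt_14_general {X Y U : Type*}
    [NormedAddCommGroup X] [NormedSpace ℝ X] [CompleteSpace X]
    [NormedAddCommGroup Y] [NormedSpace ℝ Y] [CompleteSpace Y]
    [NormedAddCommGroup U] [NormedSpace ℝ U]
    (T : ℝ → X →L[ℝ] Y) {t : ℝ} (ht : 0 < t)
    (hT : ∀ x, ContinuousOn (fun s ↦ T s x) (Icc 0 t))
    (B : U →L[ℝ] X) {c : ℝ} (hc : 0 ≤ c)
    (hbound : ∀ v : ℝ → U, ContDiff ℝ ∞ v → HasCompactSupport v → tsupport v ⊆ Ioo 0 t →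
      ‖∫ s in (0 : ℝ)..t, T (t - s) (B (v s))‖ ≤ c * ⨆ s ∈ Icc 0 t, ‖v s‖)
    {u : ℝ → U} (hu : ContinuousOn u (Icc 0 t)) :
    ‖∫ s in (0 : ℝ)..t, T (t - s) (B (u s))‖ ≤ c * ⨆ s ∈ Icc 0 t, ‖u s‖ := by
  have kernel_continuousOn (x : X) : ContinuousOn (fun s ↦ T (t - s) x) (Icc 0 t) :=
    (hT x).comp (by fun_prop) fun s hs ↦ ⟨sub_nonneg.2 hs.2, sub_le_self t hs.1⟩
  obtain ⟨M, hM⟩ := exists_opNorm_le_of_continuousOn_apply isCompact_Icc kernel_continuousOn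
  simp only [intervalIntegral.integral_of_le ht.le, integral_Ioc_eq_integral_Ioo] at hbound ⊢
  refine norm_setIntegral_apply_le_of_forall_contDiff (G := fun s ↦ (T (t - s)).comp B)
    (M := M * ‖B‖) isOpen_Ioo measure_Ioo_lt_top.ne
    (fun x ↦ (kernel_continuousOn (B x)).mono Ioo_subset_Icc_self) (fun s hs ↦ ?_)
    (fun v hv hv_compact hv_tsupport R hR ↦ ?_) (hu.mono Ioo_subset_Icc_self)
    fun s hs ↦ norm_le_biSup_norm_of_continuousOn isCompact_Icc hu (Ioo_subset_Icc_self hs)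
  · exact ((T (t - s)).opNorm_comp_le B).trans (by gcongr; exact hM s (Ioo_subset_Icc_self hs))
  · exact (hbound v hv hv_compact hv_tsupport).trans <| by
      gcongr
      exact biSup_norm_le_of_support_subset (nonempty_Ioo.2 ht)
        ((subset_tsupport v).trans hv_tsupport) hR _

/-- For a system with identity observation and bounded input operator `B`, BIBO stability
tested on smooth compactly supported inputs (in `(0,∞)`) implies the same state bound for
all continuous inputs, i.e. `B` is infinite-time `C`-control-admissible. -/
theorem stmt_14 {X U : Type*}
    [NormedAddCommGroup X] [NormedSpace ℝ X] [CompleteSpace X]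
    [NormedAddCommGroup U] [NormedSpace ℝ U] [CompleteSpace U]
    (T : ℝ → X →L[ℝ] X)
    (hT0 : T 0 = 1)
    (hTadd : ∀ s t : ℝ, 0 ≤ s → 0 ≤ t → T (s + t) = (T s).comp (T t))
    (hTcont : ∀ x : X, ContinuousOn (fun t => T t x) (Set.Ici 0))
    (B : U →L[ℝ] X) (c : ℝ) (hc : 0 < c)
    (hbound : ∀ u : ℝ → U, ContDiff ℝ (⊤ : ℕ∞) u → HasCompactSupport u →
      tsupport u ⊆ Set.Ioi 0 →
      ∀ t > (0:ℝ), ‖∫ s in (0:ℝ)..t, T (t - s) (B (u s))‖ ≤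
        c * ⨆ s ∈ Set.Icc (0:ℝ) t, ‖u s‖) :
    ∀ u : ℝ → U, ContinuousOn u (Set.Ici 0) →
      ∀ t > (0:ℝ), ‖∫ s in (0:ℝ)..t, T (t - s) (B (u s))‖ ≤
        c * ⨆ s ∈ Set.Icc (0:ℝ) t, ‖u s‖ := fun _ hu t ht ↦
  stmt_14_general T ht (fun x ↦ (hTcont x).mono Icc_subset_Ici_self) B hc.le
    (fun v hv hv_compact hv_tsupport ↦
      hbound v hv hv_compact (hv_tsupport.trans Ioo_subset_Ioi_self) t ht)
    (hu.mono Icc_subset_Ici_self)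
end
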